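/- arXiv:2510.19468 — 5 statements merged into one kernel-verified Lean document; each statement's English description precedes it below -/
import Mathlib

section
/- Fix a nonnegative integer ℓ. For every nonnegative integer a and every A > 0 there exists a constant C > 0 such that for all even integers k > ℓ + 16 and all real y > 0, |y^a · (∂^a/∂y^a) U_ℓ(y,k)| ≤ C (1 + y/k²)^{−A}. -/
/-!
For `y > 0`, differentiation under the integral sign gives
`y^a ∂_y^a U_ℓ(y,k) = (1/2πi) ∫_{Re u = 3} P_a(u) y^{-u} e^{u²} G(u) du/u`, where
`P_a(u) = (-u)(-u-1)⋯(-u-a+1)` and `G(u) = γ_ℓ(1/2+u,k)/γ_ℓ(1/2,k)`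
(`iteratedDeriv_Ufun`, `pow_mul_norm_iteratedDeriv`). Since `|Γ(s)| ≤ Γ(Re s)`, `|G(u)|` is at most
its value at `Re u`, and `e^{u²}` supplies Gaussian decay on vertical lines, so the line of
integration can be moved freely as long as `Re u ≥ -1` (`integral_vertical_eq`).

* If `y ≥ k²`, move to `Re u = B` for an integer `B ≥ max(A, 3)`. There `G(B) ≪ k^{2B}` by the
  recursion of Γ, and the integral is `≪ (y/k²)^{-B}` (`norm_integral_right_le`).
* If `y ≤ k²`, split off `P_a(0) e^{u²}/u`, whose integral over `Re u = 3` is a constant independent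
  of `y` and `k`. The rest has a removable singularity at `u = 0` because `G(0) = 1`, and moving it
  to `Re u = -1`, where `G(-1) ≪ k^{-2}`, bounds it by `O(y/k² + 1)` (`norm_integral_left_le`).
-/

open Complex Real MeasureTheory UpperHalfPlane

/-- `γ_ℓ(s,k) = (2π)^{-2s} Γ(s + (k+ℓ)/2 − 1) Γ(s + (k−ℓ)/2)`. -/
noncomputable def gammaFac (ℓ : ℕ) (k : ℤ) (s : ℂ) : ℂ :=
  (2 * (Real.pi : ℂ)) ^ (-(2 * s)) * Complex.Gamma (s + ((k : ℂ) + ℓ) / 2 - 1) *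
    Complex.Gamma (s + ((k : ℂ) - ℓ) / 2)

/-- `U_ℓ(y,k) = (1/2πi)∫_{Re u = 3} y^{−u} e^{u²} (γ_ℓ(1/2+u,k)/γ_ℓ(1/2,k)) du/u`. -/
noncomputable def Ufun (ℓ : ℕ) (y : ℝ) (k : ℤ) : ℂ :=
  (1 / (2 * Real.pi)) * ∫ t : ℝ,
    (y : ℂ) ^ (-(3 + t * Complex.I)) * Complex.exp ((3 + t * Complex.I) ^ 2) *
      (gammaFac ℓ k (1/2 + 3 + t * Complex.I) / gammaFac ℓ k (1/2)) / (3 + t * Complex.I)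

/-! ### The gamma factor -/

/-- The polynomial `(-u)(-u-1)⋯(-u-a+1)`, i.e. `y^{u+a} ∂_y^a y^{-u}`. -/
noncomputable def derivPoly (a : ℕ) (u : ℂ) : ℂ := ∏ j ∈ Finset.range a, (-(u + j))

/-- The normalised gamma factor `γ_ℓ(1/2+u,k) / γ_ℓ(1/2,k)`. -/
noncomputable def gammaRatio (ℓ : ℕ) (k : ℤ) (u : ℂ) : ℂ :=
  gammaFac ℓ k (1 / 2 + u) / gammaFac ℓ k (1 / 2)

/-- The gamma factor `γ_ℓ(1/2+σ,k)` at a real point, built from the real Gamma function; it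
majorises `|γ_ℓ(1/2+u,k)|` on the line `Re u = σ`. -/
noncomputable def gammaMaj (ℓ : ℕ) (k : ℤ) (σ : ℝ) : ℝ :=
  (2 * π) ^ (-(2 * (1 / 2 + σ))) * Real.Gamma (1 / 2 + σ + ((k : ℝ) + ℓ) / 2 - 1) *
    Real.Gamma (1 / 2 + σ + ((k : ℝ) - ℓ) / 2)

theorem norm_Gamma_le_Gamma_re {s : ℂ} (hs : 0 < s.re) : ‖Complex.Gamma s‖ ≤ Real.Gamma s.re := by
  rw [Complex.Gamma_eq_integral hs, Real.Gamma_eq_integral hs, Complex.GammaIntegral]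
  refine (norm_integral_le_integral_norm _).trans (le_of_eq ?_)
  refine setIntegral_congr_fun measurableSet_Ioi fun x hx => ?_
  simp only [Set.mem_Ioi] at hx
  simp only [norm_mul, Complex.norm_cpow_eq_rpow_re_of_pos hx, Complex.norm_real, Complex.sub_re,
    Complex.one_re, Real.norm_eq_abs, Real.abs_exp]

theorem norm_gammaFac_le (ℓ : ℕ) (k : ℤ) (hk : (ℓ : ℤ) + 16 < k) {u : ℂ} (hu : -1 ≤ u.re) :
    ‖gammaFac ℓ k (1 / 2 + u)‖ ≤ gammaMaj ℓ k u.re := by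
  have hk' : (ℓ : ℝ) + 16 < k := by exact_mod_cast hk
  have hl : (0 : ℝ) ≤ ℓ := by positivity
  have e1 : (1 / 2 + u + ((k : ℂ) + ℓ) / 2 - 1).re = 1 / 2 + u.re + ((k : ℝ) + ℓ) / 2 - 1 := by
    simp
  have e2 : (1 / 2 + u + ((k : ℂ) - ℓ) / 2).re = 1 / 2 + u.re + ((k : ℝ) - ℓ) / 2 := by
    simp
  have h1 := norm_Gamma_le_Gamma_re (s := 1 / 2 + u + ((k : ℂ) + ℓ) / 2 - 1)
    (by rw [e1]; linarith)
  have h2 := norm_Gamma_le_Gamma_re (s := 1 / 2 + u + ((k : ℂ) - ℓ) / 2)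
    (by rw [e2]; linarith)
  rw [e1] at h1
  rw [e2] at h2
  have h3 : ‖(2 * (π : ℂ)) ^ (-(2 * (1 / 2 + u)))‖ = (2 * π) ^ (-(2 * (1 / 2 + u.re))) := by
    have := Complex.norm_cpow_eq_rpow_re_of_pos (x := 2 * π) (by positivity) (-(2 * (1 / 2 + u)))
    push_cast at this
    rw [this]
    simp
  rw [gammaFac, gammaMaj, norm_mul, norm_mul, h3]
  gcongr
  exact mul_nonneg (by positivity) ((norm_nonneg _).trans h1)

theorem norm_gammaFac_half (ℓ : ℕ) (k : ℤ) (hk : (ℓ : ℤ) + 16 < k) :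
    ‖gammaFac ℓ k (1 / 2)‖ = gammaMaj ℓ k 0 := by
  have hk' : (ℓ : ℝ) + 16 < k := by exact_mod_cast hk
  have hl : (0 : ℝ) ≤ ℓ := by positivity
  have e1 : (1 / 2 + ((k : ℂ) + ℓ) / 2 - 1) = ((1 / 2 + 0 + ((k : ℝ) + ℓ) / 2 - 1 : ℝ) : ℂ) := by
    push_cast; ring
  have e2 : (1 / 2 + ((k : ℂ) - ℓ) / 2) = ((1 / 2 + 0 + ((k : ℝ) - ℓ) / 2 : ℝ) : ℂ) := by
    push_cast; ring
  have h3 : ‖(2 * (π : ℂ)) ^ (-(2 * (1 / 2 : ℂ)))‖ = (2 * π) ^ (-(2 * (1 / 2 + 0 : ℝ))) := by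
    have := Complex.norm_cpow_eq_rpow_re_of_pos (x := 2 * π) (by positivity) (-(2 * (1 / 2 : ℂ)))
    push_cast at this
    rw [this]
    simp
  rw [gammaFac, gammaMaj, norm_mul, norm_mul, h3, e1, e2, Complex.Gamma_ofReal,
    Complex.Gamma_ofReal, Complex.norm_real, Complex.norm_real, Real.norm_eq_abs, Real.norm_eq_abs,
    abs_of_pos (Real.Gamma_pos_of_pos (by linarith)),
    abs_of_pos (Real.Gamma_pos_of_pos (by linarith))]

theorem gammaMaj_pos (ℓ : ℕ) (k : ℤ) (hk : (ℓ : ℤ) + 16 < k) {σ : ℝ} (hσ : -1 ≤ σ) :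
    0 < gammaMaj ℓ k σ := by
  have hk' : (ℓ : ℝ) + 16 < k := by exact_mod_cast hk
  have hl : (0 : ℝ) ≤ ℓ := by positivity
  have h1 : 0 < Real.Gamma (1 / 2 + σ + ((k : ℝ) + ℓ) / 2 - 1) :=
    Real.Gamma_pos_of_pos (by linarith)
  have h2 : 0 < Real.Gamma (1 / 2 + σ + ((k : ℝ) - ℓ) / 2) :=
    Real.Gamma_pos_of_pos (by linarith)
  unfold gammaMaj
  positivity

theorem norm_gammaRatio_le (ℓ : ℕ) (k : ℤ) (hk : (ℓ : ℤ) + 16 < k) {u : ℂ} (hu : -1 ≤ u.re) :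
    ‖gammaRatio ℓ k u‖ ≤ gammaMaj ℓ k u.re / gammaMaj ℓ k 0 := by
  rw [gammaRatio, norm_div, norm_gammaFac_half ℓ k hk]
  have := gammaMaj_pos ℓ k hk (σ := 0) (by norm_num)
  gcongr
  exact norm_gammaFac_le ℓ k hk hu

theorem gammaRatio_zero (ℓ : ℕ) (k : ℤ) (hk : (ℓ : ℤ) + 16 < k) : gammaRatio ℓ k 0 = 1 := by
  rw [gammaRatio, add_zero]
  refine div_self fun h => ?_
  have := norm_gammaFac_half ℓ k hk
  rw [h, norm_zero] at this
  exact (gammaMaj_pos ℓ k hk (σ := 0) (by norm_num)).ne this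

theorem differentiableAt_gammaRatio (ℓ : ℕ) (k : ℤ) (hk : (ℓ : ℤ) + 16 < k) {u : ℂ}
    (hu : -2 < u.re) : DifferentiableAt ℂ (gammaRatio ℓ k) u := by
  have hk' : (ℓ : ℝ) + 16 < k := by exact_mod_cast hk
  have hl : (0 : ℝ) ≤ ℓ := by positivity
  have hG : ∀ s : ℂ, 0 < s.re → DifferentiableAt ℂ Complex.Gamma s := fun s hs =>
    Complex.differentiableAt_Gamma s fun m hm => by
      rw [hm] at hs
      simp at hs
      linarith [(Nat.cast_nonneg m : (0 : ℝ) ≤ m)]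
  have e1 : (1 / 2 + u + ((k : ℂ) + ℓ) / 2 - 1).re = 1 / 2 + u.re + ((k : ℝ) + ℓ) / 2 - 1 := by
    simp
  have e2 : (1 / 2 + u + ((k : ℂ) - ℓ) / 2).re = 1 / 2 + u.re + ((k : ℝ) - ℓ) / 2 := by
    simp
  have h1 := hG (1 / 2 + u + ((k : ℂ) + ℓ) / 2 - 1) (by rw [e1]; linarith)
  have h2 := hG (1 / 2 + u + ((k : ℂ) - ℓ) / 2) (by rw [e2]; linarith)
  have hpi : (2 * (π : ℂ)) ≠ 0 := by simp [Real.pi_ne_zero]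
  unfold gammaRatio gammaFac
  refine DifferentiableAt.div_const (((DifferentiableAt.const_cpow (by fun_prop)
    (Or.inl hpi)).mul ?_).mul ?_) _
  · exact DifferentiableAt.comp u h1 (by fun_prop)
  · exact DifferentiableAt.comp u h2 (by fun_prop)

theorem continuousOn_gammaMaj (ℓ : ℕ) (k : ℤ) (hk : (ℓ : ℤ) + 16 < k) :
    ContinuousOn (gammaMaj ℓ k) (Set.Ici (-1)) := by
  have hk' : (ℓ : ℝ) + 16 < k := by exact_mod_cast hk
  have hl : (0 : ℝ) ≤ ℓ := by positivity
  have hG : ∀ s : ℝ, 0 < s → ContinuousAt Real.Gamma s := fun s hs =>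
    (Real.differentiableAt_Gamma fun m hm => by
      rw [hm] at hs
      linarith [(Nat.cast_nonneg m : (0 : ℝ) ≤ m)]).continuousAt
  intro σ hσ
  rw [Set.mem_Ici] at hσ
  apply ContinuousAt.continuousWithinAt
  unfold gammaMaj
  refine ((ContinuousAt.rpow (by fun_prop) (by fun_prop) (Or.inl (by positivity))).mul ?_).mul ?_
  · exact ContinuousAt.comp' (hG _ (by linarith)) (by fun_prop)
  · exact ContinuousAt.comp' (hG _ (by linarith)) (by fun_prop)

theorem Gamma_add_nat_le {x : ℝ} (hx : 0 < x) (n : ℕ) :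
    Real.Gamma (x + n) ≤ (x + n) ^ n * Real.Gamma x := by
  induction n with
  | zero => simp
  | succ n ih =>
    have hp := Real.Gamma_pos_of_pos hx
    have hxn : 0 < x + n := by positivity
    have e : x + ((n + 1 : ℕ) : ℝ) = (x + n) + 1 := by push_cast; ring
    rw [e, Real.Gamma_add_one hxn.ne', pow_succ']
    calc (x + n) * Real.Gamma (x + n) ≤ (x + n) * ((x + n) ^ n * Real.Gamma x) := by gcongr
      _ ≤ (x + n + 1) * ((x + n + 1) ^ n * Real.Gamma x) := by
        have hle : x + n ≤ x + n + 1 := by linarith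
        have hpow := pow_le_pow_left₀ hxn.le hle n
        exact mul_le_mul hle (mul_le_mul_of_nonneg_right hpow hp.le) (by positivity)
          (by positivity)
      _ = _ := by ring

/-- `γ_ℓ(1/2+B,k)/γ_ℓ(1/2,k) ≪ k^{2B}` for natural `B`, from `Γ(x+B) ≤ (x+B)^B Γ(x)`. -/
theorem gammaMaj_right_le (ℓ : ℕ) (k : ℤ) (hk : (ℓ : ℤ) + 16 < k) (B : ℕ) :
    gammaMaj ℓ k B / gammaMaj ℓ k 0 ≤ ((1 + B : ℝ) ^ B) ^ 2 * ((k : ℝ) ^ 2) ^ B := by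
  have hk' : (ℓ : ℝ) + 16 < k := by exact_mod_cast hk
  have hl : (0 : ℝ) ≤ ℓ := by positivity
  have hk1 : (1 : ℝ) ≤ k := by linarith
  have hB : (0 : ℝ) ≤ B := by positivity
  rw [div_le_iff₀ (gammaMaj_pos ℓ k hk (by norm_num))]
  set x₁ : ℝ := 1 / 2 + ((k : ℝ) + ℓ) / 2 - 1 with hx₁
  set x₂ : ℝ := 1 / 2 + ((k : ℝ) - ℓ) / 2 with hx₂
  have p1 : 0 < x₁ := by linarith
  have p2 : 0 < x₂ := by linarith
  have g1 := Gamma_add_nat_le p1 B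
  have g2 := Gamma_add_nat_le p2 B
  have q1 := Real.Gamma_pos_of_pos p1
  have q2 := Real.Gamma_pos_of_pos p2
  have b1 : x₁ + B ≤ (1 + B) * k := by nlinarith
  have b2 : x₂ + B ≤ (1 + B) * k := by nlinarith
  have hpi : (1 : ℝ) ≤ 2 * π := by linarith [Real.two_le_pi]
  unfold gammaMaj
  rw [show (1 / 2 + (B : ℝ) + ((k : ℝ) + ℓ) / 2 - 1) = x₁ + B by rw [hx₁]; ring,
    show (1 / 2 + (B : ℝ) + ((k : ℝ) - ℓ) / 2) = x₂ + B by rw [hx₂]; ring,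
    show (1 / 2 + (0 : ℝ) + ((k : ℝ) + ℓ) / 2 - 1) = x₁ by rw [hx₁]; ring,
    show (1 / 2 + (0 : ℝ) + ((k : ℝ) - ℓ) / 2) = x₂ by rw [hx₂]; ring]
  have r1 : Real.Gamma (x₁ + B) ≤ ((1 + B) * k) ^ B * Real.Gamma x₁ := g1.trans (by gcongr)
  have r2 : Real.Gamma (x₂ + B) ≤ ((1 + B) * k) ^ B * Real.Gamma x₂ := g2.trans (by gcongr)
  have r3 : (2 * π) ^ (-(2 * (1 / 2 + (B : ℝ)))) ≤ (2 * π) ^ (-(2 * (1 / 2 + (0 : ℝ)))) :=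
    Real.rpow_le_rpow_of_exponent_le hpi (by linarith)
  have r1' : 0 < Real.Gamma (x₁ + B) := Real.Gamma_pos_of_pos (by linarith)
  have r2' : 0 < Real.Gamma (x₂ + B) := Real.Gamma_pos_of_pos (by linarith)
  calc _ ≤ (2 * π) ^ (-(2 * (1 / 2 + (0 : ℝ)))) * (((1 + B) * k) ^ B * Real.Gamma x₁) *
        (((1 + B) * k) ^ B * Real.Gamma x₂) := by gcongr
    _ = _ := by rw [mul_pow, pow_right_comm (k : ℝ) 2 B]; ring

/-- `γ_ℓ(-1/2,k)/γ_ℓ(1/2,k) ≪ k^{-2}`, from `Γ(x+1) = x Γ(x)` in both gamma factors. -/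
theorem gammaMaj_left_le (ℓ : ℕ) (k : ℤ) (hk : (ℓ : ℤ) + 16 < k) :
    gammaMaj ℓ k (-1) / gammaMaj ℓ k 0 ≤ (2 * π) ^ 2 * (8 * (ℓ + 2)) / (k : ℝ) ^ 2 := by
  have hk' : (ℓ : ℝ) + 16 < k := by exact_mod_cast hk
  have hl : (0 : ℝ) ≤ ℓ := by positivity
  have hk1 : (0 : ℝ) < k := by linarith
  rw [div_le_iff₀ (gammaMaj_pos ℓ k hk (by norm_num))]
  set x₁ : ℝ := 1 / 2 - 1 + ((k : ℝ) + ℓ) / 2 - 1 with hx₁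
  set x₂ : ℝ := 1 / 2 - 1 + ((k : ℝ) - ℓ) / 2 with hx₂
  have p1 : 0 < x₁ := by linarith
  have p2 : 0 < x₂ := by linarith
  have q1 := Real.Gamma_pos_of_pos p1
  have q2 := Real.Gamma_pos_of_pos p2
  unfold gammaMaj
  rw [show (1 / 2 + (-1 : ℝ) + ((k : ℝ) + ℓ) / 2 - 1) = x₁ by rw [hx₁]; ring,
    show (1 / 2 + (-1 : ℝ) + ((k : ℝ) - ℓ) / 2) = x₂ by rw [hx₂]; ring,
    show (1 / 2 + (0 : ℝ) + ((k : ℝ) + ℓ) / 2 - 1) = x₁ + 1 by rw [hx₁]; ring,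
    show (1 / 2 + (0 : ℝ) + ((k : ℝ) - ℓ) / 2) = x₂ + 1 by rw [hx₂]; ring,
    Real.Gamma_add_one p1.ne', Real.Gamma_add_one p2.ne',
    show -(2 * (1 / 2 + (-1 : ℝ))) = 1 by norm_num, show -(2 * (1 / 2 + (0 : ℝ))) = -1 by norm_num,
    Real.rpow_one, Real.rpow_neg_one]
  have b1 : (k : ℝ) / 4 ≤ x₁ := by linarith
  have b2 : (k : ℝ) / (2 * (ℓ + 2)) ≤ x₂ := by
    rw [div_le_iff₀ (by positivity)]
    nlinarith
  have b3 : (k : ℝ) ^ 2 ≤ 8 * (ℓ + 2) * (x₁ * x₂) := by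
    calc (k : ℝ) ^ 2 = 8 * (ℓ + 2) * ((k : ℝ) / 4 * (k / (2 * (ℓ + 2)))) := by field_simp; norm_num
      _ ≤ _ := by gcongr
  have e : (2 * π) ^ 2 * (8 * (ℓ + 2)) / (k : ℝ) ^ 2 *
      ((2 * π)⁻¹ * (x₁ * Real.Gamma x₁) * (x₂ * Real.Gamma x₂)) =
      (2 * π) * Real.Gamma x₁ * Real.Gamma x₂ * (8 * (ℓ + 2) * (x₁ * x₂) / (k : ℝ) ^ 2) := by
    field_simp
  rw [e]
  refine le_mul_of_one_le_right (by positivity) ?_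
  rwa [one_le_div (by positivity)]

/-! ### Gaussian bounds and contour shifts -/

theorem norm_derivPoly_le (a : ℕ) (u : ℂ) : ‖derivPoly a u‖ ≤ (‖u‖ + a) ^ a := by
  rw [derivPoly, norm_prod]
  calc ∏ j ∈ Finset.range a, ‖-(u + (j : ℂ))‖ ≤ ∏ j ∈ Finset.range a, (‖u‖ + a) := by
        refine Finset.prod_le_prod (fun _ _ => norm_nonneg _) fun j hj => ?_
        rw [norm_neg]
        refine (norm_add_le _ _).trans ?_
        rw [Complex.norm_natCast]
        have : (j : ℝ) ≤ a := by exact_mod_cast (Finset.mem_range.1 hj).le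
        linarith
    _ = _ := by simp

/-- The constant in the bound `|P_a(u) e^{u²}| ≤ gaussConst a R · e^{-(Im u)²/2}` on `|Re u| ≤ R`,
where `P_a` is `derivPoly a`. -/
noncomputable def gaussConst (a : ℕ) (R : ℝ) : ℝ := a.factorial * Real.exp (R ^ 2 + R + a + 1 / 2)

theorem gaussConst_pos (a : ℕ) (R : ℝ) : 0 < gaussConst a R := by
  unfold gaussConst; positivity

/-- The polynomial growth of `derivPoly a` costs only half of the Gaussian decay of `e^{u²}`:
`x^a ≤ a! e^x` with `x = R + |Im u| + a`, and `|t| ≤ (1 + t²)/2`. -/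
theorem norm_derivPoly_mul_exp_le (a : ℕ) {R : ℝ} {u : ℂ} (hu : |u.re| ≤ R) :
    ‖derivPoly a u * Complex.exp (u ^ 2)‖ ≤ gaussConst a R * Real.exp (-(1 / 2) * u.im ^ 2) := by
  have h1 : ‖u‖ + a ≤ R + |u.im| + a := by linarith [Complex.norm_le_abs_re_add_abs_im u]
  have hR : 0 ≤ R := (abs_nonneg _).trans hu
  have h2 : ‖derivPoly a u‖ ≤ a.factorial * Real.exp (R + |u.im| + a) := by
    refine (norm_derivPoly_le a u).trans ?_
    have := Real.pow_div_factorial_le_exp (x := R + |u.im| + a) (by positivity) a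
    rw [div_le_iff₀ (by positivity), mul_comm] at this
    refine le_trans ?_ this
    gcongr
  have h3 : ‖Complex.exp (u ^ 2)‖ ≤ Real.exp (R ^ 2 - u.im ^ 2) := by
    rw [Complex.norm_exp, Real.exp_le_exp]
    have : (u ^ 2).re = u.re ^ 2 - u.im ^ 2 := by simp [sq]
    rw [this]
    have : u.re ^ 2 ≤ R ^ 2 := sq_le_sq' (by linarith [neg_abs_le u.re]) ((le_abs_self _).trans hu)
    linarith
  rw [norm_mul]
  calc _ ≤ a.factorial * Real.exp (R + |u.im| + a) * Real.exp (R ^ 2 - u.im ^ 2) := by gcongr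
    _ ≤ _ := by
      rw [gaussConst, mul_assoc, mul_assoc, ← Real.exp_add, ← Real.exp_add]
      refine mul_le_mul_of_nonneg_left (Real.exp_le_exp.2 ?_) (by positivity)
      nlinarith [sq_nonneg (|u.im| - 1), sq_abs u.im]

theorem integrable_gauss (M : ℝ) : Integrable fun t : ℝ => M * Real.exp (-(1 / 2) * t ^ 2) :=
  (integrable_exp_neg_mul_sq (by norm_num)).const_mul M

theorem integrable_vertical {f : ℂ → ℂ} {M c : ℝ}
    (hf : ∀ t : ℝ, ContinuousAt f (c + t * Complex.I))
    (hM : ∀ t : ℝ, ‖f (c + t * Complex.I)‖ ≤ M * Real.exp (-(1 / 2) * t ^ 2)) :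
    Integrable fun t : ℝ => f (c + t * Complex.I) := by
  refine (integrable_gauss M).mono' ?_ (Filter.Eventually.of_forall hM)
  refine Continuous.aestronglyMeasurable (continuous_iff_continuousAt.2 fun t => ?_)
  exact ContinuousAt.comp' (hf t) (by fun_prop)

/-- Contour shift between the lines `Re u = a` and `Re u = b` for a function holomorphic on the
closed strip. The Gaussian bound is only required for `‖u‖ ≥ 1`, so that it may come from a formula
that degenerates at a removable singularity at `0`. -/
theorem integral_vertical_eq {f : ℂ → ℂ} {a b M : ℝ} (hab : a ≤ b) (ha : 1 ≤ |a|) (hb : 1 ≤ |b|)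
    (hf : ∀ u : ℂ, a ≤ u.re → u.re ≤ b → DifferentiableAt ℂ f u)
    (hM : ∀ u : ℂ, a ≤ u.re → u.re ≤ b → 1 ≤ ‖u‖ →
      ‖f u‖ ≤ M * Real.exp (-(1 / 2) * u.im ^ 2)) :
    ∫ t : ℝ, f (a + t * Complex.I) = ∫ t : ℝ, f (b + t * Complex.I) := by
  have hre : ∀ x t : ℝ, ((x : ℂ) + t * Complex.I).re = x := by intros; simp
  have him : ∀ x t : ℝ, ((x : ℂ) + t * Complex.I).im = t := by intros; simp
  have hint : ∀ c : ℝ, a ≤ c → c ≤ b → 1 ≤ |c| →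
      Integrable fun t : ℝ => f (c + t * Complex.I) := by
    intro c h1 h2 h3
    refine integrable_vertical (M := M) (fun t => (hf _ ?_ ?_).continuousAt) fun t => ?_
    · rwa [hre]
    · rwa [hre]
    · have := hM (c + t * Complex.I) (by rwa [hre]) (by rwa [hre])
        (h3.trans (by simpa [hre] using Complex.abs_re_le_norm ((c : ℂ) + t * Complex.I)))
      rwa [him] at this
  have lim : ∀ c : ℝ, a ≤ c → c ≤ b → 1 ≤ |c| →
      Filter.Tendsto (fun T : ℝ => ∫ t in (-T)..T, f (c + t * Complex.I)) Filter.atTop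
        (nhds (∫ t : ℝ, f (c + t * Complex.I))) := fun c h1 h2 h3 =>
    intervalIntegral_tendsto_integral (hint c h1 h2 h3) Filter.tendsto_neg_atTop_atBot
      Filter.tendsto_id
  have hgauss : Filter.Tendsto (fun T : ℝ => 2 * (M * Real.exp (-(1 / 2) * T ^ 2) * |b - a|))
      Filter.atTop (nhds 0) := by
    have h1 : Filter.Tendsto (fun T : ℝ => -(1 / 2) * T ^ 2) Filter.atTop Filter.atBot :=
      (Filter.tendsto_pow_atTop (by norm_num)).const_mul_atTop_of_neg (by norm_num)
    have h2 := (((Real.tendsto_exp_atBot.comp h1).const_mul M).mul_const |b - a|).const_mul 2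
    simpa using h2
  have hdiff : Filter.Tendsto (fun T : ℝ => (∫ t in (-T)..T, f (b + t * Complex.I)) -
      ∫ t in (-T)..T, f (a + t * Complex.I)) Filter.atTop (nhds 0) := by
    refine squeeze_zero_norm' ?_ hgauss
    filter_upwards [Filter.eventually_ge_atTop 1] with T hT
    have hrect := Complex.integral_boundary_rect_eq_zero_of_differentiableOn f
      ((a : ℂ) + (-T : ℝ) * Complex.I) ((b : ℂ) + T * Complex.I) (by
        intro u hu
        rw [hre, hre, him, him, Complex.mem_reProdIm, Set.uIcc_of_le hab] at hu
        exact (hf u hu.1.1 hu.1.2).differentiableWithinAt)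
    rw [hre, hre, him, him] at hrect
    have hor : ∀ S : ℝ, |S| = T →
        ‖∫ x in a..b, f (x + S * Complex.I)‖ ≤ M * Real.exp (-(1 / 2) * T ^ 2) * |b - a| := by
      intro S hS
      refine intervalIntegral.norm_integral_le_of_norm_le_const fun x hx => ?_
      rw [Set.uIoc_of_le hab] at hx
      have := hM (x + S * Complex.I) (by rw [hre]; exact hx.1.le) (by rw [hre]; exact hx.2)
        ((hT.trans hS.ge).trans
          (by simpa [him] using Complex.abs_im_le_norm ((x : ℂ) + S * Complex.I)))
      rwa [him, ← sq_abs, hS] at this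
    have h1 := hor (-T) (by rw [abs_neg, abs_of_nonneg (by linarith)])
    have h2 := hor T (abs_of_nonneg (by linarith))
    have e : Complex.I • ((∫ t in (-T)..T, f (b + t * Complex.I)) -
        ∫ t in (-T)..T, f (a + t * Complex.I)) =
        (∫ x in a..b, f (x + T * Complex.I)) - ∫ x in a..b, f (x + (-T : ℝ) * Complex.I) := by
      rw [smul_sub]
      linear_combination hrect
    calc _ = ‖Complex.I • ((∫ t in (-T)..T, f (b + t * Complex.I)) -
        ∫ t in (-T)..T, f (a + t * Complex.I))‖ := by rw [norm_smul, Complex.norm_I, one_mul]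
      _ ≤ _ := by
        rw [e]
        refine (norm_sub_le _ _).trans ?_
        linarith
  have h := (lim b hab le_rfl hb).sub (lim a le_rfl hab ha)
  exact (sub_eq_zero.1 (tendsto_nhds_unique h hdiff)).symm

theorem derivPoly_succ (a : ℕ) (u : ℂ) : derivPoly (a + 1) u = derivPoly a u * (-(u + a)) :=
  Finset.prod_range_succ _ _

theorem differentiable_derivPoly (a : ℕ) : Differentiable ℂ (derivPoly a) := by
  unfold derivPoly
  fun_prop

/-- Differentiation under the integral sign raises the index `a` by one in the family
`∫ y^{-u-a} P_a(u) w dt`, `u = 3 + it`, where `P_a` is `derivPoly a`. -/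
theorem hasDerivAt_integral_cpow (w : ℝ → ℂ) (hw : Continuous w) (a : ℕ) (K : ℝ)
    (hK : ∀ (n : ℕ) (t : ℝ), ‖derivPoly n (3 + t * Complex.I) * w t‖ ≤
      K * gaussConst n 3 * Real.exp (-(1 / 2) * t ^ 2)) {y : ℝ} (hy : 0 < y) :
    HasDerivAt (fun y : ℝ => ∫ t : ℝ, (y : ℂ) ^ (-(3 + t * Complex.I) - a) *
        (derivPoly a (3 + t * Complex.I) * w t))
      (∫ t : ℝ, (y : ℂ) ^ (-(3 + t * Complex.I) - (a + 1 : ℕ)) *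
        (derivPoly (a + 1) (3 + t * Complex.I) * w t)) y := by
  have hre : ∀ (n : ℕ) (t : ℝ), (-(3 + t * Complex.I) - (n : ℂ)).re = -(3 + n : ℝ) := by
    intro n t; simp; ring
  have hnorm : ∀ (n : ℕ) (x t : ℝ), 0 < x → ‖(x : ℂ) ^ (-(3 + t * Complex.I) - (n : ℂ)) *
      (derivPoly n (3 + t * Complex.I) * w t)‖ ≤
      x ^ (-(3 + n : ℝ)) * (K * gaussConst n 3) * Real.exp (-(1 / 2) * t ^ 2) := by
    intro n x t hx
    rw [norm_mul, Complex.norm_cpow_eq_rpow_re_of_pos hx, hre, mul_assoc]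
    gcongr
    exact hK n t
  have hcont : ∀ (n : ℕ) (x : ℝ), 0 < x → Continuous fun t : ℝ =>
      (x : ℂ) ^ (-(3 + t * Complex.I) - (n : ℂ)) * (derivPoly n (3 + t * Complex.I) * w t) := by
    intro n x hx
    refine Continuous.mul (Continuous.const_cpow (by fun_prop) (Or.inl ?_)) (Continuous.mul ?_ hw)
    · exact_mod_cast hx.ne'
    · exact (differentiable_derivPoly n).continuous.comp' (by fun_prop)
  refine (hasDerivAt_integral_of_dominated_loc_of_deriv_le (μ := volume) (s := Set.Ioi (y / 2))
    (F := fun (y : ℝ) (t : ℝ) => (y : ℂ) ^ (-(3 + t * Complex.I) - a) *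
        (derivPoly a (3 + t * Complex.I) * w t))
    (F' := fun (y : ℝ) (t : ℝ) => (y : ℂ) ^ (-(3 + t * Complex.I) - (a + 1 : ℕ)) *
        (derivPoly (a + 1) (3 + t * Complex.I) * w t))
    (bound := fun t => (y / 2) ^ (-(3 + (a + 1 : ℕ) : ℝ)) * (K * gaussConst (a + 1) 3) *
      Real.exp (-(1 / 2) * t ^ 2))
    (Ioi_mem_nhds (by linarith)) ?_ ?_ ?_ ?_ (integrable_gauss _) ?_).2
  · filter_upwards [Ioi_mem_nhds hy] with x hx
    exact (hcont a x hx).aestronglyMeasurable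
  · exact (integrable_gauss _).mono' (hcont a y hy).aestronglyMeasurable
      (Filter.Eventually.of_forall fun t => hnorm a y t hy)
  · exact (hcont (a + 1) y hy).aestronglyMeasurable
  · refine Filter.Eventually.of_forall fun t x hx => ?_
    have hx' : y / 2 < x := hx
    refine (hnorm (a + 1) x t (by linarith)).trans ?_
    have hpos : 0 ≤ (K * gaussConst (a + 1) 3) * Real.exp (-(1 / 2) * t ^ 2) :=
      (norm_nonneg _).trans (hK (a + 1) t)
    rw [mul_assoc, mul_assoc _ (K * _)]
    refine mul_le_mul_of_nonneg_right ?_ hpos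
    refine Real.rpow_le_rpow_of_nonpos (by linarith) hx'.le ?_
    have : (0 : ℝ) ≤ ((a + 1 : ℕ) : ℝ) := by positivity
    linarith
  · refine Filter.Eventually.of_forall fun t x hx => ?_
    have hx' : 0 < x := lt_trans (by linarith) (show y / 2 < x from hx)
    have hr : -(3 + t * Complex.I) - (a : ℂ) ≠ 0 := by
      intro h
      have := congrArg Complex.re h
      rw [hre] at this
      simp at this
      have : (0 : ℝ) ≤ a := by positivity
      linarith
    have h1 := (hasDerivAt_ofReal_cpow_const' hx'.ne' (r := -(3 + t * Complex.I) - (a : ℂ) - 1)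
      (by
        intro h
        apply hr
        linear_combination h))
    have h2 : HasDerivAt (fun x : ℝ => (x : ℂ) ^ (-(3 + t * Complex.I) - (a : ℂ)))
      ((-(3 + t * Complex.I) - (a : ℂ)) * (x : ℂ) ^ (-(3 + t * Complex.I) - (a : ℂ) - 1)) x := by
      have h3 := h1.const_mul (-(3 + t * Complex.I) - (a : ℂ))
      refine h3.congr_of_eventuallyEq (Filter.Eventually.of_forall fun z => ?_)
      simp only [sub_add_cancel]
      field_simp
    have h3 := h2.mul_const (derivPoly a (3 + t * Complex.I) * w t)
    refine h3.congr_deriv ?_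
    rw [derivPoly_succ]
    push_cast
    rw [show -(3 + t * Complex.I) - ((a : ℂ) + 1) = -(3 + t * Complex.I) - a - 1 by ring]
    ring

/-! ### The Mellin integrand of the scaled derivatives -/

/-- `P_a(u) y^{-u} γ_ℓ(1/2+u,k)/γ_ℓ(1/2,k)` with `P_a` the polynomial `derivPoly a`; the Mellin
integrand of `y^a ∂_y^a U_ℓ(y,k)` is this times `e^{u²}/u`. -/
noncomputable def weight (ℓ : ℕ) (k : ℤ) (a : ℕ) (y : ℝ) (u : ℂ) : ℂ :=
  derivPoly a u * (y : ℂ) ^ (-u) * gammaRatio ℓ k u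

theorem differentiableAt_weight (ℓ : ℕ) (k : ℤ) (hk : (ℓ : ℤ) + 16 < k) (a : ℕ) {y : ℝ}
    (hy : 0 < y) {u : ℂ} (hu : -2 < u.re) : DifferentiableAt ℂ (weight ℓ k a y) u := by
  have hy0 : (y : ℂ) ≠ 0 := by exact_mod_cast hy.ne'
  exact (((differentiable_derivPoly a) u).mul
    (DifferentiableAt.const_cpow (by fun_prop) (Or.inl hy0))).mul
    (differentiableAt_gammaRatio ℓ k hk hu)

theorem weight_zero (ℓ : ℕ) (k : ℤ) (hk : (ℓ : ℤ) + 16 < k) (a : ℕ) (y : ℝ) :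
    weight ℓ k a y 0 = derivPoly a 0 := by
  simp [weight, gammaRatio_zero ℓ k hk]

theorem norm_weight_mul_exp_le (ℓ : ℕ) (k : ℤ) (hk : (ℓ : ℤ) + 16 < k) (a : ℕ) {y : ℝ}
    (hy : 0 < y) {R : ℝ} {u : ℂ} (hu : -1 ≤ u.re) (hR : |u.re| ≤ R) :
    ‖weight ℓ k a y u * Complex.exp (u ^ 2)‖ ≤
      y ^ (-u.re) * (gammaMaj ℓ k u.re / gammaMaj ℓ k 0) * gaussConst a R *
        Real.exp (-(1 / 2) * u.im ^ 2) := by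
  have h1 := norm_derivPoly_mul_exp_le a hR
  have h2 := norm_gammaRatio_le ℓ k hk hu
  have h3 : ‖(y : ℂ) ^ (-u)‖ = y ^ (-u.re) := by
    rw [Complex.norm_cpow_eq_rpow_re_of_pos hy, Complex.neg_re]
  calc ‖weight ℓ k a y u * Complex.exp (u ^ 2)‖
      = ‖(y : ℂ) ^ (-u)‖ * ‖gammaRatio ℓ k u‖ * ‖derivPoly a u * Complex.exp (u ^ 2)‖ := by
        rw [← norm_mul, ← norm_mul, weight]; congr 1; ring
    _ ≤ y ^ (-u.re) * (gammaMaj ℓ k u.re / gammaMaj ℓ k 0) *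
        (gaussConst a R * Real.exp (-(1 / 2) * u.im ^ 2)) := by
        rw [h3]
        have := (norm_nonneg _).trans h2
        gcongr
    _ = _ := by ring

/-- A bound on a whole strip, of unspecified dependence on `y` and `k`: it only serves to make the
horizontal sides vanish in a contour shift. -/
theorem exists_strip_bound (ℓ : ℕ) (k : ℤ) (hk : (ℓ : ℤ) + 16 < k) {y : ℝ} (hy : 0 < y) (R : ℝ) :
    ∃ M, ∀ σ : ℝ, -1 ≤ σ → σ ≤ R → y ^ (-σ) * (gammaMaj ℓ k σ / gammaMaj ℓ k 0) ≤ M := by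
  have hc : ContinuousOn (fun σ : ℝ => y ^ (-σ) * (gammaMaj ℓ k σ / gammaMaj ℓ k 0))
      (Set.Icc (-1) R) := by
    refine ContinuousOn.mul ?_ (((continuousOn_gammaMaj ℓ k hk).mono
      Set.Icc_subset_Ici_self).div_const _)
    exact (Continuous.rpow (by fun_prop) (by fun_prop) (fun _ => Or.inl hy.ne')).continuousOn
  obtain ⟨M, hM⟩ := (isCompact_Icc.image_of_continuousOn hc).bddAbove
  exact ⟨M, fun σ h1 h2 => hM ⟨σ, ⟨h1, h2⟩, rfl⟩⟩

theorem norm_integral_vertical_le {f : ℂ → ℂ} {M c : ℝ}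
    (hM : ∀ t : ℝ, ‖f (c + t * Complex.I)‖ ≤ M * Real.exp (-(1 / 2) * t ^ 2)) :
    ‖∫ t : ℝ, f (c + t * Complex.I)‖ ≤ M * ∫ t : ℝ, Real.exp (-(1 / 2) * t ^ 2) := by
  rw [← integral_const_mul]
  exact norm_integral_le_of_norm_le (integrable_gauss M) (Filter.Eventually.of_forall hM)

/-- Bound from the line `Re u = B`, with no pole crossed. -/
theorem norm_integral_right_le (ℓ : ℕ) (k : ℤ) (hk : (ℓ : ℤ) + 16 < k) (a : ℕ) {y : ℝ}
    (hy : 0 < y) (B : ℕ) (hB : 3 ≤ B) :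
    ‖∫ t : ℝ, weight ℓ k a y ((3 : ℝ) + t * Complex.I) *
        Complex.exp (((3 : ℝ) + t * Complex.I) ^ 2) / ((3 : ℝ) + t * Complex.I)‖ ≤
      y ^ (-(B : ℝ)) * (gammaMaj ℓ k B / gammaMaj ℓ k 0) * gaussConst a B *
        ∫ t : ℝ, Real.exp (-(1 / 2) * t ^ 2) := by
  have hB' : (3 : ℝ) ≤ B := by exact_mod_cast hB
  obtain ⟨M, hM⟩ := exists_strip_bound ℓ k hk hy B
  set f : ℂ → ℂ := fun u => weight ℓ k a y u * Complex.exp (u ^ 2) / u with hf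
  have hnorm : ∀ u : ℂ, 1 ≤ ‖u‖ → ‖f u‖ ≤ ‖weight ℓ k a y u * Complex.exp (u ^ 2)‖ := by
    intro u hu
    rw [hf, norm_div]
    exact div_le_self (norm_nonneg _) hu
  have hshift := integral_vertical_eq (f := f) (a := 3) (b := B) (M := M * gaussConst a B) hB'
    (by norm_num) (by rw [abs_of_nonneg] <;> linarith) (by
      intro u h1 h2
      refine ((differentiableAt_weight ℓ k hk a hy (by linarith)).mul (by fun_prop)).div
        (by fun_prop) ?_
      rintro rfl
      norm_num at h1) (by
      intro u h1 h2 h3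
      refine (hnorm u h3).trans ((norm_weight_mul_exp_le ℓ k hk a hy (R := B) (by linarith)
        (by rw [abs_of_nonneg] <;> linarith)).trans ?_)
      have := gaussConst_pos a B
      gcongr
      exact hM _ (by linarith) h2)
  change ‖∫ t : ℝ, f ((3 : ℝ) + t * Complex.I)‖ ≤ _
  rw [hshift]
  refine norm_integral_vertical_le fun t => ?_
  have hre : (((B : ℝ) : ℂ) + t * Complex.I).re = B := by simp
  have him : (((B : ℝ) : ℂ) + t * Complex.I).im = t := by simp
  have h1 : 1 ≤ ‖((B : ℝ) : ℂ) + t * Complex.I‖ := by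
    have := Complex.re_le_norm (((B : ℝ) : ℂ) + t * Complex.I)
    rw [hre] at this
    linarith
  have := norm_weight_mul_exp_le ℓ k hk a hy (R := B) (u := ((B : ℝ) : ℂ) + t * Complex.I)
    (by rw [hre]; linarith) (by rw [hre, abs_of_nonneg]; linarith)
  rw [hre, him] at this
  exact (hnorm _ h1).trans this

/-- Bound from the line `Re u = -1`. The pole at `u = 0` is handled by subtracting
`P_a(0) e^{u²}/u`, whose integral over `Re u = 3` does not depend on `y` or `k`; the remainder
is a multiple of a difference quotient, hence holomorphic at `0`. -/
theorem norm_integral_left_le (ℓ : ℕ) (k : ℤ) (hk : (ℓ : ℤ) + 16 < k) (a : ℕ) {y : ℝ}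
    (hy : 0 < y) :
    ‖∫ t : ℝ, weight ℓ k a y ((3 : ℝ) + t * Complex.I) *
        Complex.exp (((3 : ℝ) + t * Complex.I) ^ 2) / ((3 : ℝ) + t * Complex.I)‖ ≤
      (y * (gammaMaj ℓ k (-1) / gammaMaj ℓ k 0) * gaussConst a 3 +
        2 * (‖derivPoly a 0‖ * gaussConst 0 3)) * ∫ t : ℝ, Real.exp (-(1 / 2) * t ^ 2) := by
  obtain ⟨M, hM⟩ := exists_strip_bound ℓ k hk hy 3
  set φ := weight ℓ k a y with hφ
  set f : ℂ → ℂ := fun u => dslope φ 0 u * Complex.exp (u ^ 2) with hf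
  set g : ℂ → ℂ := fun u => derivPoly a 0 * Complex.exp (u ^ 2) / u with hg
  have hne : ∀ u : ℂ, 1 ≤ ‖u‖ → u ≠ 0 := by
    rintro u hu rfl
    norm_num at hu
  have hfe : ∀ u : ℂ, u ≠ 0 → f u = φ u * Complex.exp (u ^ 2) / u - g u := by
    intro u hu
    simp only [hf, hg]
    rw [dslope_of_ne _ hu, slope_def_field, hφ, weight_zero ℓ k hk, sub_zero]
    ring
  have hgn : ∀ u : ℂ, |u.re| ≤ 3 → 1 ≤ ‖u‖ →
      ‖g u‖ ≤ ‖derivPoly a 0‖ * gaussConst 0 3 * Real.exp (-(1 / 2) * u.im ^ 2) := by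
    intro u h1 h2
    have h3 := norm_derivPoly_mul_exp_le 0 h1
    rw [show derivPoly 0 u = 1 by simp [derivPoly], one_mul] at h3
    rw [hg]
    simp only
    rw [norm_div, norm_mul, mul_assoc]
    exact (div_le_self (by positivity) h2).trans (by gcongr)
  have hfn : ∀ u : ℂ, -1 ≤ u.re → u.re ≤ 3 → 1 ≤ ‖u‖ →
      ‖f u‖ ≤ (y ^ (-u.re) * (gammaMaj ℓ k u.re / gammaMaj ℓ k 0) * gaussConst a 3 +
        ‖derivPoly a 0‖ * gaussConst 0 3) * Real.exp (-(1 / 2) * u.im ^ 2) := by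
    intro u h1 h2 h3
    have hR : |u.re| ≤ 3 := abs_le.2 ⟨by linarith, h2⟩
    rw [hfe u (hne u h3), add_mul]
    refine (norm_sub_le _ _).trans (add_le_add ?_ (hgn u hR h3))
    rw [norm_div]
    exact (div_le_self (norm_nonneg _) h3).trans (norm_weight_mul_exp_le ℓ k hk a hy h1 hR)
  have hopen : IsOpen {u : ℂ | -2 < u.re} := isOpen_lt continuous_const Complex.continuous_re
  have hφd : DifferentiableOn ℂ (dslope φ 0) {u : ℂ | -2 < u.re} :=
    (Complex.differentiableOn_dslope (hopen.mem_nhds (by simp))).2 fun u hu =>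
      (differentiableAt_weight ℓ k hk a hy hu).differentiableWithinAt
  have hfd : ∀ u : ℂ, -1 ≤ u.re → DifferentiableAt ℂ f u := fun u hu =>
    (hφd.differentiableAt (hopen.mem_nhds (show -2 < u.re by linarith))).mul (by fun_prop)
  have hmaj : ∀ u : ℂ, -1 ≤ u.re → u.re ≤ 3 → 1 ≤ ‖u‖ →
      ‖f u‖ ≤ (M * gaussConst a 3 + ‖derivPoly a 0‖ * gaussConst 0 3) *
        Real.exp (-(1 / 2) * u.im ^ 2) := by
    intro u h1 h2 h3
    refine (hfn u h1 h2 h3).trans ?_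
    have := gaussConst_pos a 3
    gcongr
    exact hM _ h1 h2
  have hshift := integral_vertical_eq (f := f) (a := -1) (b := 3) (by norm_num) (by norm_num)
    (by norm_num) (fun u h1 _ => hfd u h1) hmaj
  have hre : ∀ x t : ℝ, ((x : ℂ) + t * Complex.I).re = x := by intros; simp
  have him : ∀ x t : ℝ, ((x : ℂ) + t * Complex.I).im = t := by intros; simp
  have hn : ∀ x t : ℝ, 1 ≤ |x| → 1 ≤ ‖(x : ℂ) + t * Complex.I‖ := fun x t hx =>
    hx.trans (by simpa [hre] using Complex.abs_re_le_norm ((x : ℂ) + t * Complex.I))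
  have hg3 : ∀ t : ℝ, ‖g ((3 : ℝ) + t * Complex.I)‖ ≤
      ‖derivPoly a 0‖ * gaussConst 0 3 * Real.exp (-(1 / 2) * t ^ 2) := by
    intro t
    have := hgn ((3 : ℝ) + t * Complex.I) (by rw [hre]; norm_num) (hn 3 t (by norm_num))
    rwa [him] at this
  have hfi : Integrable fun t : ℝ => f ((3 : ℝ) + t * Complex.I) := by
    refine integrable_vertical (M := M * gaussConst a 3 + ‖derivPoly a 0‖ * gaussConst 0 3)
      (fun t => (hfd _ (by rw [hre]; norm_num)).continuousAt) fun t => ?_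
    have := hmaj ((3 : ℝ) + t * Complex.I) (by rw [hre]; norm_num) (by rw [hre])
      (hn 3 t (by norm_num))
    rwa [him] at this
  have hgi : Integrable fun t : ℝ => g ((3 : ℝ) + t * Complex.I) := by
    refine integrable_vertical (fun t => ?_) hg3
    exact ContinuousAt.div (by fun_prop) (by fun_prop) (hne _ (hn 3 t (by norm_num)))
  have hsplit : ∫ t : ℝ, φ ((3 : ℝ) + t * Complex.I) *
        Complex.exp (((3 : ℝ) + t * Complex.I) ^ 2) / ((3 : ℝ) + t * Complex.I) =
      (∫ t : ℝ, f ((-1 : ℝ) + t * Complex.I)) + ∫ t : ℝ, g ((3 : ℝ) + t * Complex.I) := by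
    rw [hshift, ← integral_add hfi hgi]
    refine integral_congr_ae (Filter.Eventually.of_forall fun t => ?_)
    simp only
    rw [hfe _ (hne _ (hn 3 t (by norm_num)))]
    ring
  rw [hsplit]
  have hl : ‖∫ t : ℝ, f ((-1 : ℝ) + t * Complex.I)‖ ≤
      (y * (gammaMaj ℓ k (-1) / gammaMaj ℓ k 0) * gaussConst a 3 +
        ‖derivPoly a 0‖ * gaussConst 0 3) * ∫ t : ℝ, Real.exp (-(1 / 2) * t ^ 2) := by
    refine norm_integral_vertical_le fun t => ?_
    have := hfn ((-1 : ℝ) + t * Complex.I) (by rw [hre]) (by rw [hre]; norm_num)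
      (hn (-1) t (by norm_num))
    rwa [him, hre, neg_neg, Real.rpow_one] at this
  refine (norm_add_le _ _).trans ((add_le_add hl (norm_integral_vertical_le hg3)).trans
    (le_of_eq (by ring)))

theorem iteratedDeriv_Ufun (ℓ : ℕ) (k : ℤ) (hk : (ℓ : ℤ) + 16 < k) (a : ℕ) {y : ℝ} (hy : 0 < y) :
    iteratedDeriv a (fun t : ℝ => Ufun ℓ t k) y = (1 / (2 * π)) *
      ∫ t : ℝ, (y : ℂ) ^ (-(3 + t * Complex.I) - a) * (derivPoly a (3 + t * Complex.I) *
        (Complex.exp ((3 + t * Complex.I) ^ 2) * gammaRatio ℓ k (3 + t * Complex.I) /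
          (3 + t * Complex.I))) := by
  have hre : ∀ t : ℝ, (3 + t * Complex.I).re = 3 := by intro; simp
  have him : ∀ t : ℝ, (3 + t * Complex.I).im = t := by intro; simp
  have hn : ∀ t : ℝ, 1 ≤ ‖3 + t * Complex.I‖ := fun t => by
    have := Complex.re_le_norm (3 + t * Complex.I)
    rw [hre] at this
    linarith
  have hw : Continuous fun t : ℝ => Complex.exp ((3 + t * Complex.I) ^ 2) *
      gammaRatio ℓ k (3 + t * Complex.I) / (3 + t * Complex.I) := by
    refine continuous_iff_continuousAt.2 fun t => ContinuousAt.div (ContinuousAt.mul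
      (by fun_prop) ?_) (by fun_prop) ?_
    · exact ContinuousAt.comp' (differentiableAt_gammaRatio ℓ k hk
        (by rw [hre]; norm_num)).continuousAt (by fun_prop)
    · intro h
      have := hn t
      rw [h] at this
      norm_num at this
  induction a generalizing y with
  | zero =>
    rw [iteratedDeriv_zero, Ufun]
    congr 1
    refine integral_congr_ae (Filter.Eventually.of_forall fun t => ?_)
    simp only [derivPoly, gammaRatio, Finset.range_zero, Finset.prod_empty, Nat.cast_zero, sub_zero,
      add_assoc]
    ring
  | succ a ih =>
    rw [iteratedDeriv_succ]
    have hev : iteratedDeriv a (fun t : ℝ => Ufun ℓ t k) =ᶠ[nhds y] fun y : ℝ => (1 / (2 * π)) *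
      ∫ t : ℝ, (y : ℂ) ^ (-(3 + t * Complex.I) - a) * (derivPoly a (3 + t * Complex.I) *
        (Complex.exp ((3 + t * Complex.I) ^ 2) * gammaRatio ℓ k (3 + t * Complex.I) /
          (3 + t * Complex.I))) := by
      filter_upwards [Ioi_mem_nhds hy] with x hx using ih hx
    rw [hev.deriv_eq]
    refine HasDerivAt.deriv (HasDerivAt.const_mul _ (hasDerivAt_integral_cpow _ hw a
      (gammaMaj ℓ k 3 / gammaMaj ℓ k 0) (fun n t => ?_) hy))
    have h1 := norm_derivPoly_mul_exp_le n (R := 3) (u := 3 + t * Complex.I)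
      (by rw [hre]; norm_num)
    have h2 := norm_gammaRatio_le ℓ k hk (u := 3 + t * Complex.I) (by rw [hre]; norm_num)
    rw [hre] at h2
    rw [him] at h1
    calc _ = ‖gammaRatio ℓ k (3 + t * Complex.I)‖ * ‖derivPoly n (3 + t * Complex.I) *
          Complex.exp ((3 + t * Complex.I) ^ 2)‖ / ‖3 + t * Complex.I‖ := by
          rw [← norm_mul, ← norm_div]; congr 1; ring
      _ ≤ ‖gammaRatio ℓ k (3 + t * Complex.I)‖ * ‖derivPoly n (3 + t * Complex.I) *
          Complex.exp ((3 + t * Complex.I) ^ 2)‖ := div_le_self (by positivity) (hn t)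
      _ ≤ gammaMaj ℓ k 3 / gammaMaj ℓ k 0 *
          (gaussConst n 3 * Real.exp (-(1 / 2) * t ^ 2)) := by
          have := (norm_nonneg _).trans h2
          gcongr
      _ = _ := by ring

theorem pow_mul_norm_iteratedDeriv (ℓ : ℕ) (k : ℤ) (hk : (ℓ : ℤ) + 16 < k) (a : ℕ) {y : ℝ}
    (hy : 0 < y) :
    |y| ^ a * ‖iteratedDeriv a (fun t : ℝ => Ufun ℓ t k) y‖ = 1 / (2 * π) *
      ‖∫ t : ℝ, weight ℓ k a y ((3 : ℝ) + t * Complex.I) *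
        Complex.exp (((3 : ℝ) + t * Complex.I) ^ 2) / ((3 : ℝ) + t * Complex.I)‖ := by
  have hy0 : (y : ℂ) ≠ 0 := by exact_mod_cast hy.ne'
  have e1 : |y| ^ a = ‖(y : ℂ) ^ a‖ := by rw [norm_pow, Complex.norm_real, Real.norm_eq_abs]
  have e2 : (1 / (2 * π) : ℝ) = ‖(1 / (2 * π) : ℂ)‖ := by
    rw [norm_div, norm_mul, Complex.norm_real, Real.norm_eq_abs, abs_of_pos Real.pi_pos]
    simp
  rw [iteratedDeriv_Ufun ℓ k hk a hy, e1, e2, ← norm_mul, ← norm_mul, mul_left_comm,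
    ← integral_const_mul]
  congr 3
  ext t
  rw [Complex.cpow_sub _ _ hy0, Complex.cpow_natCast, weight]
  push_cast
  have : (y : ℂ) ^ a ≠ 0 := pow_ne_zero _ hy0
  field_simp

theorem U_derivative_decay (ℓ : ℕ) (a : ℕ) (A : ℝ) (hA : 0 < A) :
    ∃ C > 0, ∀ k : ℕ, Even k → ℓ + 16 < k → ∀ y : ℝ, 0 < y →
      |y| ^ a * ‖iteratedDeriv a (fun t : ℝ => Ufun ℓ t (k : ℤ)) y‖ ≤
        C * (1 + y / (k : ℝ) ^ 2) ^ (-A) := by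
  -- An integer abscissa `B ≥ A`, so that the Gamma quotients are controlled by the recursion.
  obtain ⟨B, hB⟩ := exists_nat_ge (max A 3)
  have hBA : A ≤ B := (le_max_left _ _).trans hB
  have hB3 : 3 ≤ B := by exact_mod_cast (le_max_right _ _).trans hB
  set J : ℝ := ∫ t : ℝ, Real.exp (-(1 / 2) * t ^ 2) with hJ
  have hJ0 : 0 ≤ J := integral_nonneg fun t => (Real.exp_pos _).le
  set C₁ : ℝ := ((1 + B : ℝ) ^ B) ^ 2 * gaussConst a B * J with hC₁
  set C₂ : ℝ := ((2 * π) ^ 2 * (8 * (ℓ + 2)) * gaussConst a 3 +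
    2 * (‖derivPoly a 0‖ * gaussConst 0 3)) * J with hC₂
  have g1 := gaussConst_pos a B
  have g2 := gaussConst_pos a 3
  have g3 := gaussConst_pos 0 3
  have hC₁0 : 0 ≤ C₁ := by positivity
  have hC₂0 : 0 ≤ C₂ := by positivity
  refine ⟨1 / (2 * π) * (C₁ + C₂ + 1) * 2 ^ A, by positivity, fun k _ hk y hy => ?_⟩
  have hkZ : (ℓ : ℤ) + 16 < (k : ℤ) := by exact_mod_cast hk
  have hk0 : (0 : ℝ) < k := by exact_mod_cast (by omega : 0 < k)
  rw [pow_mul_norm_iteratedDeriv ℓ k hkZ a hy, mul_assoc, mul_assoc]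
  refine mul_le_mul_of_nonneg_left ?_ (by positivity)
  set x : ℝ := y / (k : ℝ) ^ 2 with hx
  have hx0 : 0 < x := by positivity
  -- `x ≤ 1` uses the line `Re u = -1`; `x ≥ 1` uses the line `Re u = B`.
  rcases le_total x 1 with h | h
  · have h2 : 1 ≤ (2 : ℝ) ^ A * (1 + x) ^ (-A) := by
      rw [Real.rpow_neg (by positivity), ← div_eq_mul_inv, one_le_div (by positivity)]
      exact Real.rpow_le_rpow (by positivity) (by linarith) hA.le
    refine le_trans ?_ (le_mul_of_one_le_right (by positivity) h2)
    have hl := gammaMaj_left_le ℓ k hkZ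
    refine (norm_integral_left_le ℓ k hkZ a hy).trans ?_
    have : y * (gammaMaj ℓ k (-1) / gammaMaj ℓ k 0) ≤ (2 * π) ^ 2 * (8 * (ℓ + 2)) := by
      calc _ ≤ y * ((2 * π) ^ 2 * (8 * (ℓ + 2)) / ((k : ℤ) : ℝ) ^ 2) := by gcongr
        _ = (2 * π) ^ 2 * (8 * (ℓ + 2)) * x := by rw [hx]; push_cast; ring
        _ ≤ _ := mul_le_of_le_one_right (by positivity) h
    have h3 : (y * (gammaMaj ℓ k (-1) / gammaMaj ℓ k 0) * gaussConst a 3 +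
        2 * (‖derivPoly a 0‖ * gaussConst 0 3)) * J ≤ C₂ := by
      rw [hC₂]
      gcongr
    linarith
  · have hr := gammaMaj_right_le ℓ k hkZ B
    have h2 : x ^ (-(B : ℝ)) ≤ (2 : ℝ) ^ A * (1 + x) ^ (-A) := by
      calc x ^ (-(B : ℝ)) ≤ x ^ (-A) := Real.rpow_le_rpow_of_exponent_le h (by linarith)
        _ = 2 ^ A * (2 * x) ^ (-A) := by
          rw [Real.mul_rpow (by norm_num) hx0.le, ← mul_assoc, ← Real.rpow_add (by norm_num)]
          simp
        _ ≤ _ := by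
          refine mul_le_mul_of_nonneg_left ?_ (by positivity)
          exact Real.rpow_le_rpow_of_nonpos (by linarith) (by linarith) (by linarith)
    refine (norm_integral_right_le ℓ k hkZ a hy B hB3).trans ?_
    have h3 : y ^ (-(B : ℝ)) * (gammaMaj ℓ k B / gammaMaj ℓ k 0) * gaussConst a B * J ≤
        C₁ * x ^ (-(B : ℝ)) := by
      calc _ ≤ y ^ (-(B : ℝ)) * (((1 + B : ℝ) ^ B) ^ 2 * (((k : ℤ) : ℝ) ^ 2) ^ B) *
            gaussConst a B * J := by gcongr
        _ = _ := by
          rw [hC₁, hx, Real.rpow_neg hy.le, Real.rpow_neg (by positivity), Real.rpow_natCast,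
            Real.rpow_natCast, div_pow, inv_div]
          push_cast
          ring
    refine h3.trans ?_
    have hxp : 0 < x ^ (-(B : ℝ)) := by positivity
    calc C₁ * x ^ (-(B : ℝ)) ≤ (C₁ + C₂ + 1) * x ^ (-(B : ℝ)) := by gcongr; linarith
      _ ≤ _ := by gcongr
end

section
/- Fix a nonnegative integer ℓ and a positive integer j. Then there exist a constant C > 0 and a threshold k₀ such that for all even integers k ≥ k₀, |(∂^j/∂s^j) γ_ℓ(s,k)|_{s=1/2} / γ_ℓ(1/2,k) − (2 log k)^j| ≤ C (log k)^{j−1}, where the derivatives are taken in the real variable s. -/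
/-!
Put `L = log k`. In the variable `s` the function `γ_ℓ(s,k)` factors as `exp (2 L s) * F_k(s)`,
where `F_k(s) = (2πk)^{-2s} Γ(s + u) Γ(s + v)` with `u, v = k/2 + O(1)`. By Leibniz,
`γ^{(j)} / γ = ∑ i ≤ j, (j choose i) (2L)^i F_k^{(j-i)} / F_k`, whose `i = j` term is `(2 log k)^j`,
so it is enough that each `F_k^{(m)}(1/2) / F_k(1/2)` is bounded uniformly in `k`.

This follows from Cauchy's estimate on the unit circle around `1/2` in the complex plane: there
`‖Γ(z)‖ ≤ Γ(re z)` (`norm_complexGamma_le`), and log-convexity of `Γ` gives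
`Γ(x + a) ≤ 2 x^a Γ(x)` for `x ≥ 2`, `|a| ≤ 1` (`gamma_add_le`). Since `x / (2πk)` is bounded above
and below for `x = u + 1/2` and `x = v + 1/2`, the powers of `k` cancel
(`norm_normalizedGamma_le`, `norm_iteratedDeriv_normalizedGamma_le`).
-/

/-- The real-variable version of `γ_ℓ(s,k) = (2π)^{-2s} Γ(s + (k+ℓ)/2 − 1) Γ(s + (k−ℓ)/2)`. -/
noncomputable def gammaFacR (ℓ : ℕ) (k : ℤ) (s : ℝ) : ℝ :=
  (2 * Real.pi) ^ (-(2 * s)) * Real.Gamma (s + ((k : ℝ) + ℓ) / 2 - 1) *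
    Real.Gamma (s + ((k : ℝ) - ℓ) / 2)

lemma norm_complexGamma_le {z : ℂ} (hz : 0 < z.re) : ‖Complex.Gamma z‖ ≤ Real.Gamma z.re := by
  rw [Complex.Gamma_eq_integral hz, Real.Gamma_eq_integral hz, Complex.GammaIntegral]
  refine (MeasureTheory.norm_integral_le_integral_norm _).trans (le_of_eq ?_)
  refine MeasureTheory.setIntegral_congr_fun measurableSet_Ioi fun x hx => ?_
  simp only [norm_mul]
  rw [Complex.norm_cpow_eq_rpow_re_of_pos hx, Complex.norm_real, Real.norm_eq_abs, Real.abs_exp]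
  simp

/-- A uniform form of `Γ(x + a) ≈ x ^ a Γ(x)`, from log-convexity of `Γ` on `[x, x + 1]` for
`a ≥ 0` and on `[x - 1, x]` for `a ≤ 0`. -/
lemma gamma_add_le {x a : ℝ} (hx : 2 ≤ x) (ha : |a| ≤ 1) :
    Real.Gamma (x + a) ≤ 2 * Real.exp (a * Real.log x) * Real.Gamma x := by
  obtain ⟨h1, h2⟩ := abs_le.1 ha
  have hx0 : 0 < x := by linarith
  have hG : 0 < Real.Gamma x := Real.Gamma_pos_of_pos hx0
  have conv := Real.convexOn_log_Gamma.2
  have key : Real.log (Real.Gamma (x + a)) ≤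
      Real.log 2 + a * Real.log x + Real.log (Real.Gamma x) := by
    rcases le_total 0 a with h | h
    · have := conv (x := x) hx0 (y := x + 1) (by simp; linarith) (a := 1 - a) (b := a)
        (by linarith) h (by ring)
      simp only [smul_eq_mul, Function.comp_apply] at this
      rw [Real.Gamma_add_one hx0.ne', Real.log_mul hx0.ne' hG.ne',
        show (1 - a) * x + a * (x + 1) = x + a by ring] at this
      have := Real.log_nonneg (show (1 : ℝ) ≤ 2 by norm_num)
      linarith
    · have hx1 : 0 < x - 1 := by linarith
      have := conv (x := x) hx0 (y := x - 1) hx1 (a := 1 + a) (b := -a)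
        (by linarith) (by linarith) (by ring)
      simp only [smul_eq_mul, Function.comp_apply] at this
      have hrec : Real.log (Real.Gamma x) =
          Real.log (x - 1) + Real.log (Real.Gamma (x - 1)) := by
        rw [← Real.log_mul hx1.ne' (Real.Gamma_pos_of_pos hx1).ne',
          ← Real.Gamma_add_one hx1.ne', sub_add_cancel]
      rw [show (1 + a) * x + -a * (x - 1) = x + a by ring] at this
      have hlog : Real.log x ≤ Real.log 2 + Real.log (x - 1) := by
        rw [← Real.log_mul two_ne_zero hx1.ne']
        exact Real.log_le_log hx0 (by linarith)
      have h2 := Real.log_nonneg (show (1 : ℝ) ≤ 2 by norm_num)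
      nlinarith
  have hpos : 0 < Real.Gamma (x + a) := Real.Gamma_pos_of_pos (by linarith)
  rw [← Real.exp_log hpos]
  refine (Real.exp_le_exp.2 key).trans (le_of_eq ?_)
  rw [Real.exp_add, Real.exp_add, Real.exp_log hG, Real.exp_log two_pos]

/-- The holomorphic function `s ↦ exp (-2 c s) Γ(s + u) Γ(s + v)`; with `c = log (2πk)` and
`u, v` the shifts of `γ_ℓ(·, k)`, it is `γ_ℓ(s,k) k^{-2s}`. -/
noncomputable def normalizedGamma (c u v : ℝ) (s : ℂ) : ℂ :=
  Complex.exp (-(2 * c) * s) * Complex.Gamma (s + u) * Complex.Gamma (s + v)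

lemma differentiableOn_normalizedGamma {c u v : ℝ} (hu : 3 / 2 ≤ u) (hv : 3 / 2 ≤ v) :
    DifferentiableOn ℂ (normalizedGamma c u v) {z | -1 < z.re} := by
  have aux : ∀ w : ℝ, 3 / 2 ≤ w → ∀ z : ℂ, -1 < z.re →
      DifferentiableAt ℂ (fun s : ℂ => Complex.Gamma (s + w)) z := by
    intro w hw z hz
    refine DifferentiableAt.comp z (Complex.differentiableAt_Gamma (z + w) ?_) (by fun_prop)
    intro m hm
    have := congrArg Complex.re hm
    simp at this
    have : (0 : ℝ) ≤ m := Nat.cast_nonneg m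
    linarith
  intro z hz
  refine DifferentiableAt.differentiableWithinAt ?_
  unfold normalizedGamma
  exact (DifferentiableAt.mul (by fun_prop) (aux u hu z hz)).mul (aux v hv z hz)

lemma norm_normalizedGamma_half {c u v : ℝ} (hu : 3 / 2 ≤ u) (hv : 3 / 2 ≤ v) :
    ‖normalizedGamma c u v (1 / 2)‖ =
      Real.exp (-c) * Real.Gamma (1 / 2 + u) * Real.Gamma (1 / 2 + v) := by
  have h1 : (1 / 2 + u : ℂ) = ((1 / 2 + u : ℝ) : ℂ) := by push_cast; ring
  have h2 : (1 / 2 + v : ℂ) = ((1 / 2 + v : ℝ) : ℂ) := by push_cast; ring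
  rw [normalizedGamma, h1, h2, Complex.Gamma_ofReal, Complex.Gamma_ofReal, norm_mul, norm_mul,
    Complex.norm_exp, Complex.norm_real, Complex.norm_real,
    Real.norm_of_nonneg (Real.Gamma_pos_of_pos (by linarith)).le,
    Real.norm_of_nonneg (Real.Gamma_pos_of_pos (by linarith)).le]
  congr 3
  simp
  ring

lemma norm_normalizedGamma_le {c u v D : ℝ} (hu : 3 / 2 ≤ u) (hv : 3 / 2 ≤ v)
    (hcu : |Real.log (1 / 2 + u) - c| ≤ D) (hcv : |Real.log (1 / 2 + v) - c| ≤ D)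
    {z : ℂ} (hz : ‖z - 1 / 2‖ ≤ 1) :
    ‖normalizedGamma c u v z‖ ≤ 4 * Real.exp (2 * D) * ‖normalizedGamma c u v (1 / 2)‖ := by
  obtain ⟨a, ha⟩ : ∃ a : ℝ, a = z.re - 1 / 2 := ⟨_, rfl⟩
  have ha1 : |a| ≤ 1 := by
    have := (Complex.abs_re_le_norm (z - 1 / 2)).trans hz
    simpa [ha] using this
  have hre : z.re = 1 / 2 + a := by rw [ha]; ring
  have hal := (abs_le.1 ha1).1
  -- One factor: `exp (-c a)` absorbs the growth `x ^ a` of `Γ(x + a)`.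
  have aux : ∀ w : ℝ, 3 / 2 ≤ w → |Real.log (1 / 2 + w) - c| ≤ D →
      Real.exp (-c * a) * ‖Complex.Gamma (z + w)‖ ≤
        2 * Real.exp D * Real.Gamma (1 / 2 + w) := by
    intro w hw hcw
    have hG : 0 < Real.Gamma (1 / 2 + w) := Real.Gamma_pos_of_pos (by linarith)
    have h1 : ‖Complex.Gamma (z + w)‖ ≤ Real.Gamma (1 / 2 + w + a) := by
      have := norm_complexGamma_le (z := z + w) (by simp [hre]; linarith)
      refine this.trans (le_of_eq ?_)
      congr 1
      simp [hre]; ring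
    have h2 := gamma_add_le (x := 1 / 2 + w) (by linarith) ha1
    have h3 : a * (Real.log (1 / 2 + w) - c) ≤ D := by
      refine (le_abs_self _).trans ?_
      rw [abs_mul]
      calc |a| * |Real.log (1 / 2 + w) - c| ≤ 1 * |Real.log (1 / 2 + w) - c| := by gcongr
        _ ≤ D := by linarith
    calc Real.exp (-c * a) * ‖Complex.Gamma (z + w)‖
        ≤ Real.exp (-c * a) *
          (2 * Real.exp (a * Real.log (1 / 2 + w)) * Real.Gamma (1 / 2 + w)) := by
          gcongr; exact h1.trans h2
      _ = 2 * Real.exp (a * (Real.log (1 / 2 + w) - c)) * Real.Gamma (1 / 2 + w) := by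
          rw [show a * (Real.log (1 / 2 + w) - c) = -c * a + a * Real.log (1 / 2 + w) by ring,
            Real.exp_add]
          ring
      _ ≤ _ := by gcongr
  rw [norm_normalizedGamma_half hu hv, normalizedGamma, norm_mul, norm_mul, Complex.norm_exp]
  have hexp : ((-(2 * (c : ℂ)) * z)).re = -c + (-c * a + -c * a) := by
    simp [hre]; ring
  rw [hexp, Real.exp_add, Real.exp_add, two_mul D, Real.exp_add]
  have h := mul_le_mul (aux u hu hcu) (aux v hv hcv) (by positivity)
    (by have := Real.Gamma_pos_of_pos (show 0 < 1 / 2 + u by linarith); positivity)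
  have := mul_le_mul_of_nonneg_left h (Real.exp_pos (-c)).le
  linarith

lemma norm_iteratedDeriv_normalizedGamma_le {c u v D : ℝ} (hu : 3 / 2 ≤ u) (hv : 3 / 2 ≤ v)
    (hcu : |Real.log (1 / 2 + u) - c| ≤ D) (hcv : |Real.log (1 / 2 + v) - c| ≤ D) (m : ℕ) :
    ‖iteratedDeriv m (normalizedGamma c u v) (1 / 2)‖ ≤
      m.factorial * (4 * Real.exp (2 * D) * ‖normalizedGamma c u v (1 / 2)‖) := by
  have hd : DiffContOnCl ℂ (normalizedGamma c u v) (Metric.ball (1 / 2) 1) := by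
    refine DifferentiableOn.diffContOnCl
      ((differentiableOn_normalizedGamma hu hv).mono fun z hz => ?_)
    have hz' := Metric.closure_ball_subset_closedBall hz
    rw [mem_closedBall_iff_norm] at hz'
    have := (abs_le.1 ((Complex.abs_re_le_norm (z - 1 / 2)).trans hz')).1
    simp at this
    simp only [Set.mem_ofPred_eq]
    linarith
  have := Complex.norm_iteratedDeriv_le_of_forall_mem_sphere_norm_le m one_pos hd
    (C := 4 * Real.exp (2 * D) * ‖normalizedGamma c u v (1 / 2)‖) (fun z hz =>
      norm_normalizedGamma_le hu hv hcu hcv (mem_sphere_iff_norm.1 hz).le)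
  simpa using this

/-- Real iterated derivatives of the restriction of a holomorphic function to the real axis are
the real parts of its complex iterated derivatives. -/
lemma iteratedDeriv_re_of_differentiableOn {E : ℂ → ℂ} {U : Set ℂ} (hU : IsOpen U)
    (hE : DifferentiableOn ℂ E U) (n : ℕ) :
    ∀ x : ℝ, (x : ℂ) ∈ U →
      iteratedDeriv n (fun t : ℝ => (E t).re) x = (iteratedDeriv n E x).re := by
  induction n with
  | zero => intro x _; simp
  | succ n ih =>
    intro x hx
    have hev : iteratedDeriv n (fun t : ℝ => (E t).re) =ᶠ[nhds x]
        fun t : ℝ => (iteratedDeriv n E t).re := by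
      filter_upwards [(hU.preimage Complex.continuous_ofReal).mem_nhds hx] with t ht
      exact ih t ht
    rw [iteratedDeriv_succ, hev.deriv_eq, iteratedDeriv_succ]
    have hA : AnalyticAt ℂ (iteratedDeriv n E) x := by
      rw [iteratedDeriv_eq_iterate]
      exact (hE.analyticOnNhd hU).iterated_deriv n x hx
    exact hA.differentiableAt.hasDerivAt.real_of_complex.deriv

/-- The factorisation `γ_ℓ(s,k) = exp (2 s log k) * F_k(s)` on the real axis. -/
lemma gammaFacR_eq (ℓ k : ℕ) (s : ℝ) :
    ((gammaFacR ℓ (k : ℤ) s : ℝ) : ℂ) =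
      Complex.exp (((2 * Real.log k : ℝ) : ℂ) * s) *
        normalizedGamma (Real.log (2 * Real.pi) + Real.log k) (((k : ℝ) + ℓ) / 2 - 1)
          (((k : ℝ) - ℓ) / 2) s := by
  rw [gammaFacR, normalizedGamma, Real.rpow_def_of_pos (by positivity),
    ← Complex.ofReal_add, ← Complex.ofReal_add, Complex.Gamma_ofReal, Complex.Gamma_ofReal,
    ← mul_assoc, ← mul_assoc, ← Complex.exp_add]
  push_cast
  congr 3
  · ring
  · congr 1; ring

/-- The Leibniz rule for `exp (b s) F(s)`, when the derivatives of `F` at `z` are `O(F(z))`. -/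
lemma norm_iteratedDeriv_exp_mul_sub_le {F : ℂ → ℂ} {z : ℂ} {b K : ℝ} (hb : 0 ≤ b) (j : ℕ)
    (hF : ContDiffAt ℂ j F z)
    (hK : ∀ m : ℕ, ‖iteratedDeriv m F z‖ ≤ m.factorial * (K * ‖F z‖)) :
    ‖iteratedDeriv j (fun s => Complex.exp ((b : ℂ) * s) * F s) z -
        (b : ℂ) ^ j * (Complex.exp ((b : ℂ) * z) * F z)‖ ≤
      (∑ i ∈ Finset.range j, (j.choose i : ℝ) * b ^ i * ((j - i).factorial * K)) *
        ‖Complex.exp ((b : ℂ) * z) * F z‖ := by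
  have hL := iteratedDeriv_mul (f := fun s => Complex.exp ((b : ℂ) * s)) (g := F) (n := j) (x := z)
    (by fun_prop) hF
  have hfun : (fun s => Complex.exp ((b : ℂ) * s) * F s) =
      (fun s => Complex.exp ((b : ℂ) * s)) * F := rfl
  rw [hfun, hL, Finset.sum_range_succ]
  simp only [iteratedDeriv_cexp_const_mul, Nat.choose_self, Nat.sub_self, iteratedDeriv_zero,
    Nat.cast_one, one_mul]
  rw [mul_assoc ((b : ℂ) ^ j), add_sub_cancel_right, Finset.sum_mul]
  refine norm_sum_le_of_le _ fun i _ => ?_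
  rw [norm_mul, norm_mul, norm_mul, norm_mul, norm_pow, Complex.norm_real,
    Real.norm_of_nonneg hb, Complex.norm_natCast]
  calc (j.choose i : ℝ) * (b ^ i * ‖Complex.exp (b * z)‖) * ‖iteratedDeriv (j - i) F z‖
      ≤ (j.choose i : ℝ) * (b ^ i * ‖Complex.exp (b * z)‖) *
        ((j - i).factorial * (K * ‖F z‖)) := by
        gcongr; exact hK _
    _ = _ := by ring

theorem gamma_higher_log_derivative (ℓ : ℕ) (j : ℕ) (hj : 0 < j) :
    ∃ C > 0, ∃ k₀ : ℕ, ∀ k : ℕ, Even k → k₀ ≤ k →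
      |iteratedDeriv j (gammaFacR ℓ (k : ℤ)) (1/2) / gammaFacR ℓ (k : ℤ) (1/2) -
          (2 * Real.log k) ^ j| ≤ C * (Real.log k) ^ (j - 1) := by
  obtain ⟨D, hD⟩ : ∃ D : ℝ, D = Real.log 4 + Real.log (2 * Real.pi) := ⟨_, rfl⟩
  obtain ⟨K, hKdef⟩ : ∃ K : ℝ, K = 4 * Real.exp (2 * D) := ⟨_, rfl⟩
  have hKpos : 0 < K := by rw [hKdef]; positivity
  refine ⟨(∑ i ∈ Finset.range j, (j.choose i : ℝ) * 2 ^ i * ((j - i).factorial * K)) + 1,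
    by positivity, 2 * ℓ + 8, fun k _ hk => ?_⟩
  have hkR : 2 * (ℓ : ℝ) + 8 ≤ k := by exact_mod_cast hk
  have hl0 : (0 : ℝ) ≤ ℓ := Nat.cast_nonneg ℓ
  have hk0 : (0 : ℝ) < k := by linarith
  obtain ⟨L, hL⟩ : ∃ L : ℝ, L = Real.log k := ⟨_, rfl⟩
  have hL1 : 1 ≤ L := by
    rw [hL, Real.le_log_iff_exp_le hk0]
    have := Real.exp_one_lt_d9
    linarith
  obtain ⟨u, hu⟩ : ∃ u : ℝ, u = ((k : ℝ) + ℓ) / 2 - 1 := ⟨_, rfl⟩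
  obtain ⟨v, hv⟩ : ∃ v : ℝ, v = ((k : ℝ) - ℓ) / 2 := ⟨_, rfl⟩
  obtain ⟨c, hc⟩ : ∃ c : ℝ, c = Real.log (2 * Real.pi) + Real.log k := ⟨_, rfl⟩
  have hu1 : 3 / 2 ≤ u := by rw [hu]; linarith
  have hv1 : 3 / 2 ≤ v := by rw [hv]; linarith
  have hpi : 0 ≤ Real.log (2 * Real.pi) := Real.log_nonneg (by linarith [Real.pi_gt_three])
  have h4 : 0 ≤ Real.log 4 := Real.log_nonneg (by norm_num)
  -- `k / 4 ≤ x ≤ k` for `x = 1/2 + u` and `x = 1/2 + v`.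
  have hlog : ∀ x : ℝ, (k : ℝ) / 4 ≤ x → x ≤ k → |Real.log x - c| ≤ D := by
    intro x h1 h2
    have hx0 : 0 < x := by linarith
    have hup := Real.log_le_log hx0 h2
    have hlo := Real.log_le_log (by positivity) h1
    rw [Real.log_div hk0.ne' (by norm_num)] at hlo
    rw [abs_le, hc, hD]
    constructor <;> linarith
  have hcu := hlog (1 / 2 + u) (by rw [hu]; linarith) (by rw [hu]; linarith)
  have hcv := hlog (1 / 2 + v) (by rw [hv]; linarith) (by rw [hv]; linarith)
  have hUopen : IsOpen {z : ℂ | -1 < z.re} := isOpen_lt continuous_const Complex.continuous_re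
  have hFd := differentiableOn_normalizedGamma (c := c) hu1 hv1
  have hmem : (1 / 2 : ℂ) ∈ {z : ℂ | -1 < z.re} := by
    simp only [Set.mem_ofPred_eq]; norm_num
  have hbound := norm_iteratedDeriv_exp_mul_sub_le (F := normalizedGamma c u v) (z := 1 / 2)
    (b := 2 * L) (K := K) (by linarith) j
    ((hFd.contDiffOn hUopen).contDiffAt (hUopen.mem_nhds hmem))
    (fun m => by rw [hKdef]; exact norm_iteratedDeriv_normalizedGamma_le hu1 hv1 hcu hcv m)
  obtain ⟨E, hE⟩ : ∃ E : ℂ → ℂ,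
    E = fun s => Complex.exp (((2 * L : ℝ) : ℂ) * s) * normalizedGamma c u v s := ⟨_, rfl⟩
  have hEd : DifferentiableOn ℂ E {z : ℂ | -1 < z.re} := by
    rw [hE]
    exact DifferentiableOn.mul (by fun_prop) hFd
  have hfac : ∀ s : ℝ, ((gammaFacR ℓ (k : ℤ) s : ℝ) : ℂ) = E s := by
    intro s
    rw [gammaFacR_eq, hE, hL, hc, hu, hv]
  have hfun : gammaFacR ℓ (k : ℤ) = fun t : ℝ => (E t).re := by
    funext t
    rw [← hfac, Complex.ofReal_re]
  have hcast : (((1 / 2 : ℝ)) : ℂ) = 1 / 2 := by push_cast; rfl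
  have hder : iteratedDeriv j (gammaFacR ℓ (k : ℤ)) (1 / 2) = (iteratedDeriv j E (1 / 2)).re := by
    rw [hfun, iteratedDeriv_re_of_differentiableOn hUopen hEd j (1 / 2) (by rwa [hcast]), hcast]
  obtain ⟨r, hr⟩ : ∃ r : ℝ, r = gammaFacR ℓ (k : ℤ) (1 / 2) := ⟨_, rfl⟩
  have hrpos : 0 < r := by
    rw [hr, gammaFacR]
    have h1 := Real.Gamma_pos_of_pos (show 0 < 1 / 2 + ((((k : ℕ) : ℤ) : ℝ) + ℓ) / 2 - 1 by
      push_cast; linarith)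
    have h2 := Real.Gamma_pos_of_pos (show 0 < 1 / 2 + ((((k : ℕ) : ℤ) : ℝ) - ℓ) / 2 by
      push_cast; linarith)
    positivity
  have hEr : Complex.exp (((2 * L : ℝ) : ℂ) * (1 / 2)) * normalizedGamma c u v (1 / 2) = r := by
    rw [hr, hfac, hcast, hE]
  rw [hEr, ← hE, Complex.norm_real, Real.norm_of_nonneg hrpos.le] at hbound
  rw [hder, ← hr, ← hL]
  have hre : |(iteratedDeriv j E (1 / 2)).re - (2 * L) ^ j * r| ≤
      (∑ i ∈ Finset.range j, (j.choose i : ℝ) * (2 * L) ^ i * ((j - i).factorial * K)) * r := by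
    refine le_trans (le_of_eq ?_) ((Complex.abs_re_le_norm _).trans hbound)
    rw [Complex.sub_re, ← Complex.ofReal_pow, ← Complex.ofReal_mul, Complex.ofReal_re]
  have hdiv : (iteratedDeriv j E (1 / 2)).re / r - (2 * L) ^ j =
      ((iteratedDeriv j E (1 / 2)).re - (2 * L) ^ j * r) / r := by
    field_simp
  rw [hdiv, abs_div, abs_of_pos hrpos, div_le_iff₀ hrpos]
  refine hre.trans (mul_le_mul_of_nonneg_right ?_ hrpos.le)
  have hLpow : 0 ≤ L ^ (j - 1) := by positivity
  rw [add_mul, Finset.sum_mul]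
  refine le_add_of_le_of_nonneg (Finset.sum_le_sum fun i hi => ?_) (by linarith)
  have hij : i ≤ j - 1 := by have := Finset.mem_range.1 hi; omega
  calc (j.choose i : ℝ) * (2 * L) ^ i * ((j - i).factorial * K)
      = (j.choose i : ℝ) * 2 ^ i * ((j - i).factorial * K) * L ^ i := by ring
    _ ≤ _ := by gcongr
end

section
/- Fix a nonnegative integer ℓ and a complex number w with Re(w) = −1/2. Then there exist a constant C > 0 and a threshold k₀ such that for all even integers k ≥ k₀, |γ_ℓ(1/2 + w, k)/γ_ℓ(1/2, k)| ≤ C k^{−1}. -/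
/-!
Write `a = (k + ℓ)/2 - 1` and `b = (k - ℓ)/2`. Since `Re (1/2 + w) = 0`, Euler's integral gives
`|Γ(1/2 + w + a)| ≤ Γ(a)` and `|Γ(1/2 + w + b)| ≤ Γ(b)`, and the powers of `2π` contribute a factor
of absolute value `2π`. Log-convexity of `Γ` at `x + 1`, the midpoint of `x + 1/2` and `x + 3/2`,
shows that `Γ(x)` is at most `√(2/x) Γ(x + 1/2)` for `x ≥ 1/2`. For `k ≥ 2ℓ + 4` both `a` and `b`
are at least `k/4`, so each of the two Gamma quotients is at most `√(8/k)`, and `C = 16π` works.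
-/

open Complex Real MeasureTheory UpperHalfPlane

/-- Euler's integral estimated by absolute values. -/
lemma norm_Gamma_le_Gamma_re_s10 (z : ℂ) (hz : 0 < z.re) : ‖Complex.Gamma z‖ ≤ Real.Gamma z.re := by
  rw [Complex.Gamma_eq_integral hz, Real.Gamma_eq_integral hz, Complex.GammaIntegral]
  refine (norm_integral_le_integral_norm _).trans_eq ?_
  refine setIntegral_congr_fun measurableSet_Ioi fun x hx => ?_
  have hx' : 0 < x := hx
  simp only [norm_mul, Complex.norm_real, Complex.norm_cpow_eq_rpow_re_of_pos hx', Real.norm_eq_abs,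
    abs_of_pos (Real.exp_pos _), Complex.sub_re, Complex.one_re]

/-- The squared form of `Γ(x) ≤ √(2/x) Γ(x + 1/2)`. -/
lemma Gamma_sq_mul_le (x : ℝ) (hx : 1 / 2 ≤ x) :
    Real.Gamma x ^ 2 * x ≤ 2 * Real.Gamma (x + 1 / 2) ^ 2 := by
  have hx0 : 0 < x := by linarith
  have hG : 0 < Real.Gamma (x + 1 / 2) := Real.Gamma_pos_of_pos (by linarith)
  have hG' : 0 < Real.Gamma (x + 1 / 2 + 1) := Real.Gamma_pos_of_pos (by linarith)
  have h := Real.Gamma_mul_add_mul_le_rpow_Gamma_mul_rpow_Gamma (s := x + 1 / 2)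
    (t := x + 1 / 2 + 1) (a := 1 / 2) (b := 1 / 2) (by linarith) (by linarith) (by norm_num)
    (by norm_num) (by norm_num)
  rw [show 1 / 2 * (x + 1 / 2) + 1 / 2 * (x + 1 / 2 + 1) = x + 1 by ring,
    ← Real.mul_rpow hG.le hG'.le, ← Real.sqrt_eq_rpow, Real.Gamma_add_one hx0.ne',
    Real.Gamma_add_one (by linarith : x + 1 / 2 ≠ 0)] at h
  have h2 := (Real.le_sqrt' (mul_pos hx0 (Real.Gamma_pos_of_pos hx0))).1 h
  have h3 : x * (Real.Gamma x ^ 2 * x) ≤ x * (2 * Real.Gamma (x + 1 / 2) ^ 2) := by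
    nlinarith [sq_nonneg (Real.Gamma (x + 1 / 2))]
  exact le_of_mul_le_mul_left h3 hx0

lemma norm_Gamma_ratio_le (z : ℂ) (hz : z.re = 0) (x c : ℝ) (hc : 0 < c) (hcx : c ≤ x)
    (hx : 1 / 2 ≤ x) :
    ‖Complex.Gamma (z + x) / Complex.Gamma (1 / 2 + x)‖ ≤ √(2 / c) := by
  have hx0 : 0 < x := by linarith
  have hG : 0 < Real.Gamma (x + 1 / 2) := Real.Gamma_pos_of_pos (by linarith)
  have h1 : ‖Complex.Gamma (z + x)‖ ≤ Real.Gamma x := by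
    simpa [hz] using norm_Gamma_le_Gamma_re_s10 (z + x) (by simpa [hz] using hx0)
  have h2 : ‖Complex.Gamma (1 / 2 + x)‖ = Real.Gamma (x + 1 / 2) := by
    rw [show (1 / 2 + x : ℂ) = ((x + 1 / 2 : ℝ) : ℂ) by push_cast; ring, Complex.Gamma_ofReal,
      Complex.norm_real, Real.norm_eq_abs, abs_of_pos hG]
  rw [norm_div, h2]
  refine (div_le_div_of_nonneg_right h1 hG.le).trans (Real.le_sqrt_of_sq_le ?_)
  rw [div_pow, div_le_div_iff₀ (by positivity) hc]
  exact (mul_le_mul_of_nonneg_left hcx (sq_nonneg _)).trans (Gamma_sq_mul_le x hx)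

theorem gamma_ratio_decay_half_shift (ℓ : ℕ) (w : ℂ) (hw : w.re = -1/2) :
    ∃ C > 0, ∃ k₀ : ℕ, ∀ k : ℕ, Even k → k₀ ≤ k →
      ‖gammaFac ℓ (k : ℤ) (1/2 + w) / gammaFac ℓ (k : ℤ) (1/2)‖ ≤ C * (k : ℝ)⁻¹ := by
  refine ⟨16 * π, by positivity, 2 * ℓ + 4, fun k _ hk => ?_⟩
  have hk' : 2 * (ℓ : ℝ) + 4 ≤ k := by exact_mod_cast hk
  have hl : (0 : ℝ) ≤ ℓ := Nat.cast_nonneg ℓ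
  have hk0 : (0 : ℝ) < k := by linarith
  have hz : (1 / 2 + w).re = 0 := by
    rw [Complex.add_re, hw]; norm_num
  have ha := norm_Gamma_ratio_le (1 / 2 + w) hz (((k : ℝ) + ℓ) / 2 - 1) (k / 4) (by linarith)
    (by linarith) (by linarith)
  have hb := norm_Gamma_ratio_le (1 / 2 + w) hz (((k : ℝ) - ℓ) / 2) (k / 4) (by linarith)
    (by linarith) (by linarith)
  have hp : ‖(2 * (π : ℂ)) ^ (-(2 * (1 / 2 + w))) / (2 * (π : ℂ)) ^ (-(2 * (1 / 2 : ℂ)))‖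
      = 2 * π := by
    have h2 : (2 * (π : ℂ)) = ((2 * π : ℝ) : ℂ) := by push_cast; rfl
    have e1 : (-(2 * (1 / 2 + w))).re = 0 := by
      rw [Complex.neg_re, show (2 : ℂ) = ((2 : ℝ) : ℂ) by norm_num, Complex.re_ofReal_mul]
      simp [hw]; norm_num
    rw [norm_div, h2, Complex.norm_cpow_eq_rpow_re_of_pos (by positivity),
      Complex.norm_cpow_eq_rpow_re_of_pos (by positivity), e1,
      show (-(2 * (1 / 2 : ℂ))) = ((-1 : ℝ) : ℂ) by norm_num, Complex.ofReal_re, Real.rpow_zero,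
      Real.rpow_neg_one, one_div, inv_inv]
  have hs : √(2 / ((k : ℝ) / 4)) * √(2 / ((k : ℝ) / 4)) = 8 * (k : ℝ)⁻¹ := by
    rw [Real.mul_self_sqrt (by positivity)]
    field_simp
    norm_num
  have hsplit : gammaFac ℓ (k : ℤ) (1/2 + w) / gammaFac ℓ (k : ℤ) (1/2) =
      (2 * (π : ℂ)) ^ (-(2 * (1 / 2 + w))) / (2 * (π : ℂ)) ^ (-(2 * (1 / 2 : ℂ))) *
      ((Complex.Gamma (1 / 2 + w + ((((k : ℝ) + ℓ) / 2 - 1 : ℝ) : ℂ)) /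
        Complex.Gamma (1 / 2 + ((((k : ℝ) + ℓ) / 2 - 1 : ℝ) : ℂ))) *
      (Complex.Gamma (1 / 2 + w + ((((k : ℝ) - ℓ) / 2 : ℝ) : ℂ)) /
        Complex.Gamma (1 / 2 + ((((k : ℝ) - ℓ) / 2 : ℝ) : ℂ)))) := by
    unfold gammaFac
    push_cast
    rw [← add_sub_assoc, ← add_sub_assoc, mul_div_mul_comm, mul_div_mul_comm, mul_assoc]
  rw [hsplit, norm_mul, norm_mul, hp]
  calc _ ≤ 2 * π * (√(2 / ((k : ℝ) / 4)) * √(2 / ((k : ℝ) / 4))) := by gcongr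
    _ = 16 * π * (k : ℝ)⁻¹ := by rw [hs]; ring
end

section
/- Let u : ℝ → ℝ be a smooth function with compact support contained in (0, ∞). Then for every A > 0 there exists a constant C > 0 such that for all real K ≥ 1, |4 ∑_{k even, k ≥ 2} u((k−1)/K) − 2K ∫_0^∞ u(ξ) dξ| ≤ C K^{−A}, the sum being over positive even integers k. -/
open MeasureTheory

/-!
The sum over odd integers is a sum over the shifted lattice `(1/2 + ℤ) / c` with `c = K / 2`; the
negative lattice points contribute nothing because `u` vanishes there. Poisson summation turns it
into `∑ₙ c û(c n) e(n / 2)`. The term `n = 0` is `c ∫ u`, which is the main term, and the remaining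
terms are `O(c ^ (-N))` for every `N` because the Fourier transform of a Schwartz function is
Schwartz. This estimate is `scaled_poisson`, stated for any Schwartz function and any shift.
-/

open scoped SchwartzMap FourierTransform

lemma fourier_comp_div (g : ℝ → ℂ) {c : ℝ} (hc : 0 < c) (w : ℝ) :
    𝓕 (fun x : ℝ => g (x / c)) w = c * 𝓕 g (c * w) := by
  rw [Real.fourier_real_eq, Real.fourier_real_eq]
  have h := Measure.integral_comp_div (fun v : ℝ => Real.fourierChar (-(v * (c * w))) • g v) c
  rw [abs_of_pos hc, Complex.real_smul] at h
  rw [← h]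
  congr 1 with v
  have : v / c * (c * w) = v * w := by field_simp
  rw [this]

/-- The Riemann sum of a Schwartz function over a shifted lattice of mesh `1 / c` agrees with its
integral up to `O(c ^ (-(N + 1)))`, uniformly in the shift: all nonzero frequencies in the Poisson
summation formula are negligible. -/
lemma scaled_poisson (g : 𝓢(ℝ, ℂ)) (N : ℕ) :
    ∃ D > 0, ∀ c : ℝ, 0 < c → ∀ x : ℝ,
      ‖∑' n : ℤ, g ((x + n) / c) - c * ∫ v, g v‖ ≤ D * (c ^ (N + 1))⁻¹ := by
  obtain ⟨D, hD, hdecay⟩ := (𝓕 g).decay (N + 2) 0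
  have hs : Summable fun n : ℤ => |(n : ℝ)| ^ (-2 : ℝ) := Real.summable_abs_int_rpow one_lt_two
  -- The added `1` only serves to make the constant positive.
  refine ⟨D * (∑' n : ℤ, |(n : ℝ)| ^ (-2 : ℝ) + 1), ?_, fun c hc x => ?_⟩
  · have : 0 ≤ ∑' n : ℤ, |(n : ℝ)| ^ (-2 : ℝ) := tsum_nonneg fun n => by positivity
    positivity
  let f : 𝓢(ℝ, ℂ) := SchwartzMap.compCLMOfContinuousLinearEquiv ℂ
    (ContinuousLinearEquiv.unitsEquivAut ℝ (Units.mk0 c⁻¹ (inv_ne_zero hc.ne'))) g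
  have hf : ∀ y, f y = g (y / c) := fun y => by
    simp [f, div_eq_mul_inv]
  have hF : ∀ w : ℝ, 𝓕 f w = c * 𝓕 g (c * w) := fun w => by
    rw [SchwartzMap.fourier_coe, SchwartzMap.fourier_coe, ← fourier_comp_div _ hc]
    congr 1
  have hP := SchwartzMap.tsum_eq_tsum_fourier f x
  simp only [hf, hF] at hP
  set T : ℤ → ℂ := fun n => (c : ℂ) * 𝓕 g (c * n) * fourier n (x : UnitAddCircle) with hT
  have hbound : ∀ n : ℤ, n ≠ 0 →
      ‖T n‖ ≤ D * (c ^ (N + 1))⁻¹ * |(n : ℝ)| ^ (-2 : ℝ) := fun n hn => by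
    have h1 : ‖T n‖ = c * ‖𝓕 g (c * n)‖ := by
      rw [hT]
      simp only [norm_mul, fourier_apply, Circle.norm_coe, mul_one, Complex.norm_real,
        Real.norm_eq_abs, abs_of_pos hc]
    have hn1 : 1 ≤ |(n : ℝ)| := by exact_mod_cast Int.one_le_abs hn
    have hn0 : 0 < |(n : ℝ)| := by linarith
    have h2 := hdecay (c * n)
    rw [norm_iteratedFDeriv_zero, Real.norm_eq_abs, abs_mul, abs_of_pos hc] at h2
    have h3 : c ^ (N + 2) * |(n : ℝ)| ^ 2 * ‖𝓕 g (c * n)‖ ≤ D := by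
      refine le_trans ?_ h2
      rw [mul_pow]
      gcongr
      omega
    rw [h1, Real.rpow_neg hn0.le, Real.rpow_two, ← div_eq_mul_inv, ← div_eq_mul_inv, div_div,
      le_div_iff₀ (by positivity)]
    refine le_trans (le_of_eq ?_) h3
    ring
  have hite : ∀ n : ℤ, ‖if n = 0 then 0 else T n‖ ≤
      D * (c ^ (N + 1))⁻¹ * |(n : ℝ)| ^ (-2 : ℝ) := fun n => by
    split_ifs with h
    · rw [norm_zero]; positivity
    · exact hbound n h
  have hTs : Summable T := by
    refine Summable.of_norm_bounded_eventually (hs.mul_left (D * (c ^ (N + 1))⁻¹)) ?_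
    filter_upwards [(Set.finite_singleton (0 : ℤ)).compl_mem_cofinite] with n hn
    exact hbound n hn
  have hT0 : T 0 = c * ∫ v, g v := by
    simp [hT, SchwartzMap.fourier_coe, Real.fourier_real_eq]
  rw [hP, hTs.tsum_eq_add_tsum_ite 0, hT0, add_sub_cancel_left]
  refine (tsum_of_norm_bounded (hs.mul_left (D * (c ^ (N + 1))⁻¹)).hasSum hite).trans ?_
  rw [tsum_mul_left]
  have : 0 < D * (c ^ (N + 1))⁻¹ := by positivity
  nlinarith

theorem poisson_average (u : ℝ → ℝ) (hu : ContDiff ℝ (⊤ : ℕ∞) u) (huc : HasCompactSupport u)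
    (husupp : Function.support u ⊆ Set.Ioi 0) (A : ℝ) (hA : 0 < A) :
    ∃ C > 0, ∀ K : ℝ, 1 ≤ K →
      |4 * ∑' m : ℕ, u ((2 * m + 1) / K) - 2 * K * ∫ ξ in Set.Ioi (0:ℝ), u ξ| ≤
        C * K ^ (-A) := by
  have hgc : HasCompactSupport fun x => (u x : ℂ) := huc.comp_left Complex.ofReal_zero
  let g : 𝓢(ℝ, ℂ) := hgc.toSchwartzMap (Complex.ofRealCLM.contDiff.comp hu)
  have hg : ∀ x, g x = (u x : ℂ) := fun x => rfl
  obtain ⟨N, hN⟩ := exists_nat_ge A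
  obtain ⟨D, hD, hmain⟩ := scaled_poisson g N
  refine ⟨4 * (D * 2 ^ (N + 1)), by positivity, fun K hK => ?_⟩
  have hK0 : 0 < K := by linarith
  have h := hmain (K / 2) (by positivity) (1 / 2)
  have hsum : ∑' n : ℤ, g ((1 / 2 + n) / (K / 2)) = ((∑' m : ℕ, u ((2 * m + 1) / K) : ℝ) : ℂ) := by
    have hsupp : Function.support (fun n : ℤ => u ((1 / 2 + n) / (K / 2))) ⊆
        Set.range ((↑) : ℕ → ℤ) := fun n hn => by
      have h1 : (0 : ℝ) < (1 / 2 + n) / (K / 2) := husupp hn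
      have h2 : (0 : ℝ) < 1 / 2 + n := (div_pos_iff_of_pos_right (by positivity)).1 h1
      have h3 : (-1 : ℝ) < n := by linarith
      have h4 : -1 < n := by exact_mod_cast h3
      exact ⟨n.toNat, Int.toNat_of_nonneg (by omega)⟩
    simp only [hg]
    rw [← Complex.ofReal_tsum, ← Nat.cast_injective.tsum_eq hsupp]
    congr 2 with m
    congr 1
    push_cast
    field_simp
    ring
  have hint : ∫ v, g v = ((∫ ξ in Set.Ioi (0:ℝ), u ξ : ℝ) : ℂ) := by
    rw [setIntegral_eq_integral_of_forall_compl_eq_zero fun x hx =>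
      Function.notMem_support.1 fun h => hx (husupp h)]
    exact integral_ofReal
  rw [hsum, hint, ← Complex.ofReal_mul, ← Complex.ofReal_sub, Complex.norm_real,
    Real.norm_eq_abs] at h
  have hpow : ((K / 2) ^ (N + 1))⁻¹ ≤ 2 ^ (N + 1) * K ^ (-A) := by
    rw [div_pow, inv_div, div_eq_mul_inv]
    gcongr
    rw [← Real.rpow_natCast, ← Real.rpow_neg hK0.le]
    exact Real.rpow_le_rpow_of_exponent_le hK (by push_cast; linarith)
  calc _ = 4 * |∑' m : ℕ, u ((2 * m + 1) / K) - K / 2 * ∫ ξ in Set.Ioi (0:ℝ), u ξ| := by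
        rw [← abs_of_pos (four_pos (α := ℝ)), ← abs_mul, abs_of_pos (four_pos (α := ℝ))]
        congr 1
        ring
    _ ≤ 4 * (D * (2 ^ (N + 1) * K ^ (-A))) := by
        gcongr
        exact h.trans (by gcongr)
    _ = _ := by ring
end

section
/- Let w : ℝ → ℂ be an integrable function with ∫_ℝ t⁴ |w(t)| dt < ∞. Then for every real x and every real K > 0, |∫_ℝ w(t) e((x/(2π)) cos(2πt/K)) dt − e(x/(2π)) ∫_ℝ w(t) e(−π x t²/K²) dt| ≤ (2π⁴/3) (|x|/K⁴) ∫_ℝ t⁴ |w(t)| dt. -/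
/-!
With `θ = 2πt/K`, the two phases are `x cos θ` and `x (1 - θ²/2)` (in radians), once the constant
`e(x/(2π))` is moved under the integral. The fourth-order Taylor bound
`0 ≤ cos θ - (1 - θ²/2) ≤ θ⁴/24` (`abs_cos_sub_le`) and the Lipschitz bound
`|e(a) - e(b)| ≤ 2π|a - b|` (`norm_e_sub_e_le`) make the integrands differ by at most
`|w(t)| |x| θ⁴/24 = (2π⁴/3) (|x|/K⁴) t⁴ |w(t)|`, which is then integrated.
-/

open Complex Real MeasureTheory

/-- `e(x) = e^{2πix}`. -/
noncomputable def e (x : ℝ) : ℂ := Complex.exp (2 * Real.pi * Complex.I * x)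

lemma e_add (a b : ℝ) : e (a + b) = e a * e b := by
  simp only [e, ← Complex.exp_add]
  congr 1
  push_cast
  ring

lemma norm_e (a : ℝ) : ‖e a‖ = 1 := by
  have h : (2 * Real.pi * Complex.I * a : ℂ) = ((2 * Real.pi * a : ℝ) : ℂ) * Complex.I := by
    push_cast
    ring
  rw [e, h, Complex.norm_exp_ofReal_mul_I]

lemma continuous_e : Continuous e := by
  unfold e
  fun_prop

lemma norm_e_sub_e_le (a b : ℝ) : ‖e a - e b‖ ≤ 2 * Real.pi * |a - b| := by
  have h1 : e a - e b = e b * (e (a - b) - 1) := by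
    rw [mul_sub, ← e_add, mul_one]
    congr 2
    ring
  have h2 : e (a - b) = Complex.exp (Complex.I * ((2 * Real.pi * (a - b) : ℝ) : ℂ)) := by
    rw [e]
    congr 1
    push_cast
    ring
  rw [h1, norm_mul, norm_e, one_mul, h2]
  refine Real.norm_exp_I_mul_ofReal_sub_one_le.trans_eq ?_
  rw [Real.norm_eq_abs, abs_mul, abs_of_pos Real.two_pi_pos]

/-- The upper bound comes from `cos θ = 1 - 2 sin²(θ/2)` and `u - u³/6 ≤ sin u` for `u ≥ 0`. -/
lemma abs_cos_sub_le (θ : ℝ) : |Real.cos θ - (1 - θ ^ 2 / 2)| ≤ θ ^ 4 / 24 := by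
  wlog h : 0 ≤ θ generalizing θ
  · have := this (-θ) (by linarith)
    rwa [Real.cos_neg, neg_sq, Even.neg_pow (by decide)] at this
  rw [abs_of_nonneg (sub_nonneg.2 Real.one_sub_sq_div_two_le_cos)]
  obtain ⟨u, rfl⟩ : ∃ u, θ = 2 * u := ⟨θ / 2, by ring⟩
  have hu : 0 ≤ u := by linarith
  have hs := Real.sin_ge_sub_cube hu
  have hsin : u ^ 2 - u ^ 4 / 3 ≤ Real.sin u ^ 2 := by
    by_cases h6 : u ^ 2 ≤ 6
    · have h0 : 0 ≤ u - u ^ 3 / 6 := by nlinarith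
      have h1 := pow_le_pow_left₀ h0 hs 2
      nlinarith [sq_nonneg (u ^ 3)]
    · -- here the left-hand side is already negative
      nlinarith [sq_nonneg (Real.sin u), sq_nonneg u]
  rw [Real.cos_two_mul, Real.cos_sq']
  nlinarith

/-- The pointwise estimate behind the theorem. -/
lemma norm_phase_sub_le (x K t : ℝ) (hK : 0 < K) :
    ‖e (x / (2 * Real.pi) * Real.cos (2 * Real.pi * t / K)) -
        e (x / (2 * Real.pi)) * e (-(Real.pi * x * t ^ 2) / K ^ 2)‖ ≤
      (2 * Real.pi ^ 4 / 3) * (|x| / K ^ 4) * t ^ 4 := by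
  have hpi := Real.pi_pos
  rw [← e_add]
  refine (norm_e_sub_e_le _ _).trans ?_
  have h : x / (2 * Real.pi) * Real.cos (2 * Real.pi * t / K) -
      (x / (2 * Real.pi) + -(Real.pi * x * t ^ 2) / K ^ 2) =
      x / (2 * Real.pi) *
        (Real.cos (2 * Real.pi * t / K) - (1 - (2 * Real.pi * t / K) ^ 2 / 2)) := by
    field_simp
    ring
  rw [h, abs_mul, abs_div, abs_of_pos Real.two_pi_pos]
  calc 2 * Real.pi * (|x| / (2 * Real.pi) *
        |Real.cos (2 * Real.pi * t / K) - (1 - (2 * Real.pi * t / K) ^ 2 / 2)|)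
      ≤ 2 * Real.pi * (|x| / (2 * Real.pi) * ((2 * Real.pi * t / K) ^ 4 / 24)) := by
        gcongr
        exact abs_cos_sub_le _
    _ = _ := by
        field_simp
        ring

theorem cosine_phase_approximation (w : ℝ → ℂ) (hw : Integrable w)
    (hw4 : Integrable (fun t : ℝ => t ^ 4 * ‖w t‖)) (x K : ℝ) (hK : 0 < K) :
    ‖(∫ t : ℝ, w t * e (x / (2 * Real.pi) * Real.cos (2 * Real.pi * t / K))) -
        e (x / (2 * Real.pi)) * ∫ t : ℝ, w t * e (-(Real.pi * x * t ^ 2) / K ^ 2)‖ ≤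
      (2 * Real.pi ^ 4 / 3) * (|x| / K ^ 4) * ∫ t : ℝ, t ^ 4 * ‖w t‖ := by
  have hint : ∀ f : ℝ → ℝ, Continuous f → Integrable (fun t => w t * e (f t)) := fun f hf =>
    hw.mul_bdd (c := 1) (continuous_e.comp hf).aestronglyMeasurable
      (Filter.Eventually.of_forall fun t => (norm_e _).le)
  rw [← integral_const_mul, ← integral_const_mul,
    ← integral_sub (hint _ (by fun_prop)) ((hint _ (by fun_prop)).const_mul _)]
  refine norm_integral_le_of_norm_le (hw4.const_mul _) (Filter.Eventually.of_forall fun t => ?_)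
  calc _ = ‖w t‖ * ‖e (x / (2 * Real.pi) * Real.cos (2 * Real.pi * t / K)) -
        e (x / (2 * Real.pi)) * e (-(Real.pi * x * t ^ 2) / K ^ 2)‖ := by
        rw [← norm_mul]
        congr 1
        ring
    _ ≤ ‖w t‖ * ((2 * Real.pi ^ 4 / 3) * (|x| / K ^ 4) * t ^ 4) := by
        gcongr
        exact norm_phase_sub_le x K t hK
    _ = _ := by ring
end
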